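/- arXiv:1507.01049 — 2 statements merged into one kernel-verified Lean document; each statement's English description precedes it below -/
import Mathlib

section
/- Let q ≥ 4 be a prime power with q ≡ 1 (mod 4) and q ∉ {5, 9, 29}. Then the group PSL(2,q) admits no factorization PSL(2,q) = AB with both A and B proper subgroups. -/
open Matrix
open scoped MatrixGroups

namespace PSLFact

set_option linter.unusedSectionVars false

universe u

open Polynomial in
theorem exists_ext (F : Type u) [Field F] [Fintype F] :
    ∃ (K : Type u) (_ : Field K) (_ : Algebra F K) (_ : Finite K),
      ∀ a : F, IsSquare (algebraMap F K a) := by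
  classical
  let f : F[X] := ∏ a : F, (X ^ 2 - C a)
  refine ⟨f.SplittingField, inferInstance, inferInstance, Module.finite_of_finite F, fun a => ?_⟩
  have hs := SplittingField.splits f
  have hf0 : f ≠ 0 := Finset.prod_ne_zero_iff.2 fun a _ => X_pow_sub_C_ne_zero (by norm_num) a
  have hd : (X ^ 2 - C a) ∣ f := Finset.dvd_prod_of_mem (fun a : F => (X ^ 2 - C a)) (Finset.mem_univ a)
  have hs' : ((X ^ 2 - C a).map (algebraMap F f.SplittingField)).Splits :=
    hs.of_dvd (by simpa [Polynomial.map_eq_zero] using hf0) (Polynomial.map_dvd _ hd)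
  obtain ⟨r, hr⟩ := hs'.exists_eval_eq_zero (by
    rw [Polynomial.degree_map, degree_X_pow_sub_C (by norm_num)]; norm_num)
  refine ⟨r, ?_⟩
  simp [sub_eq_zero] at hr
  rw [← hr]; ring

/-- The projective line over `K`, with the action of `SL(2,F)`. -/
def P1 (_F K : Type*) : Type _ := OnePoint K

section act
variable {F K : Type*} [Field F] [Field K] [Algebra F K]

/-- the point at infinity -/
def inf : P1 F K := (OnePoint.infty : OnePoint K)
/-- a finite point -/
def fin (x : K) : P1 F K := (OnePoint.some x : OnePoint K)

theorem fin_inj {x y : K} : (fin x : P1 F K) = fin y ↔ x = y := OnePoint.coe_eq_coe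
theorem fin_ne_inf {x : K} : (fin x : P1 F K) ≠ inf := OnePoint.coe_ne_infty x
theorem cases_pt (x : P1 F K) : x = inf ∨ ∃ y, x = fin y := by
  rcases x with _ | y
  · exact Or.inl rfl
  · exact Or.inr ⟨y, rfl⟩

open Classical in
noncomputable instance : MulAction SL(2, F) (P1 F K) :=
  MulAction.compHom (OnePoint K)
    ((SpecialLinearGroup.toGL).comp (SpecialLinearGroup.map (algebraMap F K)))

noncomputable instance [Finite K] : Fintype (P1 F K) :=
  @Fintype.ofFinite _ (inferInstanceAs (Finite (Option K)))

theorem smul_inf (M : SL(2, F)) : M • (inf : P1 F K) =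
    open Classical in if M 1 0 = 0 then inf
      else fin (algebraMap F K (M 0 0) / algebraMap F K (M 1 0)) := by
  classical
  have := OnePoint.smul_infty_eq_ite
    (((SpecialLinearGroup.toGL).comp (SpecialLinearGroup.map (algebraMap F K))) M)
  simp at this
  refine Eq.trans this ?_
  split_ifs <;> rfl

theorem smul_fin (M : SL(2, F)) (x : K) : M • (fin x : P1 F K) =
    open Classical in if algebraMap F K (M 1 0) * x + algebraMap F K (M 1 1) = 0 then inf
      else fin ((algebraMap F K (M 0 0) * x + algebraMap F K (M 0 1)) /
        (algebraMap F K (M 1 0) * x + algebraMap F K (M 1 1))) := by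
  classical
  have := @OnePoint.smul_some_eq_ite _ _ _
    (((SpecialLinearGroup.toGL).comp (SpecialLinearGroup.map (algebraMap F K))) M) x
  simp at this
  refine Eq.trans this ?_
  split_ifs <;> rfl

theorem smul_inf_iff (M : SL(2, F)) : M • (inf : P1 F K) = inf ↔ M 1 0 = 0 := by
  rw [smul_inf]; split_ifs with h
  · simp [h]
  · simp [h, fin_ne_inf]

theorem det_eq (M : SL(2, F)) : M 0 0 * M 1 1 - M 0 1 * M 1 0 = 1 := by
  have := M.det_coe; rwa [det_fin_two] at this

theorem det_eq' (M : SL(2, F)) : algebraMap F K (M 0 0) * algebraMap F K (M 1 1) -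
    algebraMap F K (M 0 1) * algebraMap F K (M 1 0) = 1 := by
  rw [← map_mul, ← map_mul, ← map_sub, det_eq, map_one]

theorem smul_fin_iff (M : SL(2, F)) (x : K) : M • (fin x : P1 F K) = fin x ↔
    algebraMap F K (M 1 0) * x ^ 2 + (algebraMap F K (M 1 1) - algebraMap F K (M 0 0)) * x
      - algebraMap F K (M 0 1) = 0 := by
  have hd := det_eq' (K := K) M
  rw [smul_fin]; split_ifs with h
  · refine ⟨fun h' => (fin_ne_inf h'.symm).elim, fun h' => ?_⟩
    grind
  · rw [fin_inj, div_eq_iff h]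
    grind

/-- trace plus or minus two -/
def par (M : SL(2, F)) : Prop := (M 0 0 + M 1 1) ^ 2 = 4

theorem ext4 {M N : SL(2, F)} (h1 : M 0 0 = N 0 0) (h2 : M 0 1 = N 0 1) (h3 : M 1 0 = N 1 0)
    (h4 : M 1 1 = N 1 1) : M = N := by
  ext i j; fin_cases i <;> fin_cases j <;> assumption

theorem ne_pm {M : SL(2, F)} (h1 : M ≠ 1) (h2 : M ≠ -1) (hb : M 0 1 = 0) (hc : M 1 0 = 0)
    (had : M 0 0 = M 1 1) : False := by
  have hd := det_eq M
  have : (M 0 0 - 1) * (M 0 0 + 1) = 0 := by rw [hb, ← had] at hd; linear_combination hd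
  rcases mul_eq_zero.1 this with h | h
  · exact h1 (ext4 (by simp; linear_combination h) (by simp [hb]) (by simp [hc])
      (by simp [← had]; linear_combination h))
  · exact h2 (ext4 (by simp; linear_combination h) (by simp [hb]) (by simp [hc])
      (by simp [← had]; linear_combination h))

open Classical in
theorem card_fix [Finite K] (h2 : (2 : F) ≠ 0) (hK : ∀ a : F, IsSquare (algebraMap F K a))
    (M : SL(2, F)) (hM : M ≠ 1) (hM' : M ≠ -1) :
    (Finset.univ.filter fun x : P1 F K => M • x = x).card = if par M then 1 else 2 := by
  have hd := det_eq M
  have hd' := det_eq' (K := K) M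
  have inj := (algebraMap F K).injective
  have h2' : (2 : K) ≠ 0 := by
    rw [← map_ofNat (algebraMap F K) 2]; exact (map_ne_zero (algebraMap F K)).2 h2
  by_cases hc : M 1 0 = 0
  · by_cases had : M 0 0 = M 1 1
    · have hb : M 0 1 ≠ 0 := fun hb => ne_pm hM hM' hb hc had
      have hp : par M := by
        unfold par; rw [hc, ← had] at hd; rw [← had]; linear_combination 4 * hd
      rw [if_pos hp, Finset.card_eq_one]
      refine ⟨inf, ?_⟩
      ext x
      rcases cases_pt x with rfl | ⟨y, rfl⟩
      · simp [smul_inf_iff, hc]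
      · simp [smul_fin_iff, hc, had, hb, fin_ne_inf]
    · have hp : ¬ par M := by
        unfold par
        intro h
        have : (M 0 0 - M 1 1) ^ 2 = 0 := by rw [hc] at hd; linear_combination h - 4 * hd
        exact had (sub_eq_zero.1 (pow_eq_zero_iff (by norm_num) |>.1 this))
      rw [if_neg hp, Finset.card_eq_two]
      have hne : algebraMap F K (M 1 1) - algebraMap F K (M 0 0) ≠ 0 := by
        rw [sub_ne_zero]; exact fun h => had (inj h).symm
      refine ⟨inf, fin (algebraMap F K (M 0 1) / (algebraMap F K (M 1 1) - algebraMap F K (M 0 0))),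
        fin_ne_inf.symm, ?_⟩
      ext x
      rcases cases_pt x with rfl | ⟨y, rfl⟩
      · simp [smul_inf_iff, hc]
      · simp [smul_fin_iff, hc, fin_ne_inf, fin_inj, eq_div_iff hne, sub_eq_zero, mul_comm]
  · have hc' : algebraMap F K (M 1 0) ≠ 0 := (map_ne_zero _).2 hc
    obtain ⟨s, hs⟩ := hK ((M 0 0 + M 1 1) ^ 2 - 4)
    have hs' : s = 0 ↔ par M := by
      unfold par
      rw [← sub_eq_zero (b := (4 : F)), ← map_eq_zero (algebraMap F K), hs, mul_self_eq_zero]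
    simp only [map_sub, map_pow, map_add, map_ofNat] at hs
    have key : ∀ y : K, M • (fin y : P1 F K) = fin y ↔
        (y = (algebraMap F K (M 0 0) - algebraMap F K (M 1 1) + s) / (2 * algebraMap F K (M 1 0)) ∨
        y = (algebraMap F K (M 0 0) - algebraMap F K (M 1 1) - s) / (2 * algebraMap F K (M 1 0))) := by
      intro y
      have h2c := mul_ne_zero h2' hc'
      rw [smul_fin_iff, eq_div_iff h2c, eq_div_iff h2c]
      generalize algebraMap F K (M 0 0) = a at *
      generalize algebraMap F K (M 0 1) = b at *
      generalize algebraMap F K (M 1 0) = c at *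
      generalize algebraMap F K (M 1 1) = d at *
      constructor
      · intro h
        have : (y * (2 * c) - (a - d + s)) * (y * (2 * c) - (a - d - s)) = 0 := by
          linear_combination (4 * c) * h + hs - 4 * hd'
        rcases mul_eq_zero.1 this with h | h
        · exact Or.inl (sub_eq_zero.1 h)
        · exact Or.inr (sub_eq_zero.1 h)
      · intro h
        have : (y * (2 * c) - (a - d + s)) * (y * (2 * c) - (a - d - s)) = 0 := by
          rcases h with h | h <;> rw [h] <;> ring
        have h' : (2 * (2 * c)) * (c * y ^ 2 + (d - a) * y - b) = 0 := by
          linear_combination this - hs + 4 * hd'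
        exact (mul_eq_zero.1 h').resolve_left (mul_ne_zero h2' h2c)
    split_ifs with hp
    · rw [hs'.2 hp] at key
      rw [Finset.card_eq_one]
      refine ⟨fin ((algebraMap F K (M 0 0) - algebraMap F K (M 1 1)) /
        (2 * algebraMap F K (M 1 0))), ?_⟩
      ext x
      rcases cases_pt x with rfl | ⟨y, rfl⟩
      · simp [smul_inf_iff, hc, fin_ne_inf.symm]
      · simp [key, fin_inj]
    · rw [Finset.card_eq_two]
      refine ⟨fin ((algebraMap F K (M 0 0) - algebraMap F K (M 1 1) + s) /
        (2 * algebraMap F K (M 1 0))), fin ((algebraMap F K (M 0 0) - algebraMap F K (M 1 1) - s) /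
        (2 * algebraMap F K (M 1 0))), ?_, ?_⟩
      · rw [Ne, fin_inj, div_left_inj' (mul_ne_zero h2' hc')]
        intro h
        have : 2 * s = 0 := by linear_combination h
        exact hp (hs'.1 ((mul_eq_zero.1 this).resolve_left h2'))
      ext x
      rcases cases_pt x with rfl | ⟨y, rfl⟩
      · simp [smul_inf_iff, hc, fin_ne_inf.symm]
      · simp [key, fin_inj]
end act
end PSLFact

namespace PSLFact
set_option linter.unusedSectionVars false

section count
variable {F K : Type*} [Field F] [Fintype F] [Field K] [Finite K] [Algebra F K]

open Classical

/-- order of the stabilizer -/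
noncomputable def S (H : Subgroup SL(2, F)) (x : P1 F K) : ℕ :=
  (Finset.univ.filter fun M : SL(2, F) => M ∈ H ∧ M • x = x).card

/-- number of parabolic elements in the stabilizer -/
noncomputable def PP (H : Subgroup SL(2, F)) (x : P1 F K) : ℕ :=
  (Finset.univ.filter fun M : SL(2, F) => ((M ∈ H ∧ M ≠ 1 ∧ M ≠ -1) ∧ M • x = x) ∧ par M).card

/-- weight of a point -/
noncomputable def W (H : Subgroup SL(2, F)) (x : P1 F K) : ℕ :=
  ∑ M ∈ Finset.univ.filter (fun M : SL(2, F) => (M ∈ H ∧ M ≠ 1 ∧ M ≠ -1) ∧ M • x = x),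
    if par M then 2 else 1

/-- orbit of a point -/
noncomputable def Ob (H : Subgroup SL(2, F)) (x : P1 F K) : Finset (P1 F K) :=
  Finset.univ.filter fun y => ∃ M ∈ H, M • x = y

theorem neg_one_smul (x : P1 F K) : (-1 : SL(2, F)) • x = x := by
  rcases cases_pt x with rfl | ⟨y, rfl⟩
  · simp [smul_inf_iff]
  · simp [smul_fin_iff]

theorem neg_smul' (M : SL(2, F)) (x : P1 F K) : (-M) • x = M • x := by
  rw [← neg_one_mul, mul_smul, neg_one_smul]

theorem one_ne_neg (h2 : (2 : F) ≠ 0) : (1 : SL(2, F)) ≠ -1 := by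
  intro h
  have := congrArg (fun M : SL(2, F) => M 0 0) h
  simp at this
  apply h2
  linear_combination this

theorem card_nc (h2 : (2 : F) ≠ 0) (H : Subgroup SL(2, F)) (hH : -1 ∈ H) :
    (Finset.univ.filter fun M : SL(2, F) => M ∈ H ∧ M ≠ 1 ∧ M ≠ -1).card + 2 = Nat.card H := by
  have h : (Finset.univ.filter fun M : SL(2, F) => M ∈ H ∧ M ≠ 1 ∧ M ≠ -1) =
      (Finset.univ.filter fun M : SL(2, F) => M ∈ H) \ {1, -1} := by
    ext M; simp
  rw [h, Finset.card_sdiff_of_subset, Finset.card_pair (one_ne_neg h2)]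
  · have h1 : (Finset.univ.filter fun M : SL(2, F) => M ∈ H).card = Nat.card H := by
      rw [Nat.card_eq_fintype_card, Fintype.card_subtype]
    have h3 : 2 ≤ (Finset.univ.filter fun M : SL(2, F) => M ∈ H).card := by
      refine (Finset.card_pair (one_ne_neg (F := F) h2)).symm.le.trans (Finset.card_le_card ?_)
      intro M; simp; rintro (rfl | rfl) <;> simp [hH, H.one_mem]
    omega
  · intro M; simp; rintro (rfl | rfl) <;> simp [hH, H.one_mem]

theorem sum_W (h2 : (2 : F) ≠ 0) (hK : ∀ a : F, IsSquare (algebraMap F K a))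
    (H : Subgroup SL(2, F)) (hH : -1 ∈ H) :
    ∑ x : P1 F K, W H x + 4 = 2 * Nat.card H := by
  rw [← card_nc h2 H hH]
  unfold W
  have : ∀ x : P1 F K,
    (∑ M ∈ Finset.univ.filter (fun M : SL(2, F) => (M ∈ H ∧ M ≠ 1 ∧ M ≠ -1) ∧ M • x = x),
      if par M then 2 else 1) =
    ∑ M ∈ Finset.univ.filter (fun M : SL(2, F) => (M ∈ H ∧ M ≠ 1 ∧ M ≠ -1)),
      if M • x = x then (if par M then 2 else 1) else 0 := by
    intro x
    rw [← Finset.filter_filter, Finset.sum_filter]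
  simp_rw [this]
  rw [Finset.sum_comm]
  have h' : ∀ M ∈ Finset.univ.filter (fun M : SL(2, F) => (M ∈ H ∧ M ≠ 1 ∧ M ≠ -1)),
      (∑ x : P1 F K, if M • x = x then (if par M then 2 else 1) else 0) = 2 := by
    intro M hM
    simp only [Finset.mem_filter] at hM
    rw [← Finset.sum_filter, Finset.sum_const, card_fix h2 hK M hM.2.2.1 hM.2.2.2]
    split_ifs <;> simp
  rw [Finset.sum_congr rfl h', Finset.sum_const]
  simp; ring

theorem W_eq (h2 : (2 : F) ≠ 0) (H : Subgroup SL(2, F)) (hH : -1 ∈ H) (x : P1 F K) :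
    W H x + 2 = S H x + PP H x := by
  unfold W S PP
  have h : (Finset.univ.filter fun M : SL(2, F) => (M ∈ H ∧ M ≠ 1 ∧ M ≠ -1) ∧ M • x = x) =
      (Finset.univ.filter fun M : SL(2, F) => M ∈ H ∧ M • x = x) \ {1, -1} := by
    ext M; simp; tauto
  have hsub : ({1, -1} : Finset SL(2, F)) ⊆
      (Finset.univ.filter fun M : SL(2, F) => M ∈ H ∧ M • x = x) := by
    intro M; simp; rintro (rfl | rfl) <;> simp [hH, H.one_mem, neg_one_smul]
  have hc : (Finset.univ.filter fun M : SL(2, F) => (M ∈ H ∧ M ≠ 1 ∧ M ≠ -1) ∧ M • x = x).card + 2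
      = (Finset.univ.filter fun M : SL(2, F) => M ∈ H ∧ M • x = x).card := by
    have := Finset.card_le_card hsub
    rw [Finset.card_pair (one_ne_neg h2)] at this
    rw [h, Finset.card_sdiff_of_subset hsub, Finset.card_pair (one_ne_neg h2)]
    omega
  rw [← hc, ← Finset.filter_filter _ (fun M => par M), Finset.card_filter (fun M => par M),
    Finset.card_eq_sum_ones]
  have : ∀ M : SL(2, F), (if par M then 2 else 1) = 1 + if par M then 1 else 0 := by
    intro M; split_ifs <;> rfl
  simp_rw [this, Finset.sum_add_distrib]
  omega

theorem par_conj (g M : SL(2, F)) : par (g * M * g⁻¹) ↔ par M := by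
  have h1 : Matrix.trace (g * M * g⁻¹).1 = Matrix.trace M.1 := by
    have e : (g * M * g⁻¹).1 = g.1 * M.1 * (g⁻¹).1 := rfl
    have e' : (g⁻¹).1 * g.1 = 1 := congrArg Subtype.val (inv_mul_cancel g)
    rw [e, Matrix.trace_mul_comm, ← mul_assoc, e', one_mul]
  rw [Matrix.trace_fin_two, Matrix.trace_fin_two] at h1
  unfold par
  constructor
  · intro h; rw [← h, ← h1]
  · intro h; rw [← h, ← h1]

theorem W_smul (H : Subgroup SL(2, F)) (x : P1 F K) {g : SL(2, F)} (hg : g ∈ H) :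
    W H (g • x) = W H x := by
  unfold W
  symm
  refine Finset.sum_equiv (MulAut.conj g).toEquiv ?_ ?_
  · intro M
    simp only [Finset.mem_filter, Finset.mem_univ, true_and, MulEquiv.toEquiv_eq_coe,
      EquivLike.coe_coe, MulAut.conj_apply]
    have e1 : g * M * g⁻¹ ∈ H ↔ M ∈ H := by
      rw [H.mul_mem_cancel_right (H.inv_mem hg), H.mul_mem_cancel_left hg]
    have e2 : g * M * g⁻¹ = 1 ↔ M = 1 := by
      rw [mul_inv_eq_iff_eq_mul, one_mul, mul_eq_left]
    have e3 : g * M * g⁻¹ = -1 ↔ M = -1 := by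
      rw [mul_inv_eq_iff_eq_mul, neg_one_mul, ← mul_neg_one, mul_right_inj]
    have e4 : (g * M * g⁻¹) • g • x = g • x ↔ M • x = x := by
      rw [mul_smul, mul_smul, inv_smul_smul, smul_left_cancel_iff]
    rw [e1, e4, Ne, Ne, Ne, Ne, not_congr e2, not_congr e3]
  · intro M _
    simp [par_conj]

theorem card_Ob (H : Subgroup SL(2, F)) (x : P1 F K) :
    (Ob H x).card * S H x = Nat.card H := by
  have h := MulAction.card_orbit_mul_card_stabilizer_eq_card_group H x
  rw [← Nat.card_eq_fintype_card, ← Nat.card_eq_fintype_card, ← Nat.card_eq_fintype_card] at h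
  rw [← h]
  congr 1
  · rw [Ob, ← Fintype.card_subtype, ← Nat.card_eq_fintype_card]
    apply Nat.card_congr
    apply Equiv.subtypeEquivRight
    intro y
    constructor
    · rintro ⟨M, hM, rfl⟩; exact ⟨⟨M, hM⟩, rfl⟩
    · rintro ⟨⟨M, hM⟩, rfl⟩; exact ⟨M, hM, rfl⟩
  · rw [S, ← Fintype.card_subtype, ← Nat.card_eq_fintype_card]
    apply Nat.card_congr
    exact
      { toFun := fun M => ⟨⟨M.1, M.2.1⟩, M.2.2⟩
        invFun := fun M => ⟨M.1.1, M.1.2, M.2⟩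
        left_inv := fun M => rfl
        right_inv := fun M => rfl }

/-- stable sets -/
def Stable (H : Subgroup SL(2, F)) (Y : Finset (P1 F K)) : Prop :=
  ∀ M ∈ H, ∀ x ∈ Y, M • x ∈ Y

theorem mem_Ob_self (H : Subgroup SL(2, F)) (x : P1 F K) : x ∈ Ob H x := by
  simp [Ob]; exact ⟨1, H.one_mem, one_smul _ _⟩

theorem stable_univ (H : Subgroup SL(2, F)) : Stable H (Finset.univ : Finset (P1 F K)) :=
  fun _ _ _ _ => Finset.mem_univ _

theorem peel (H : Subgroup SL(2, F)) {Y : Finset (P1 F K)} (hY : Stable H Y) {x : P1 F K}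
    (hx : x ∈ Y) : Stable H (Y \ Ob H x) ∧
      ∑ y ∈ Y, W H y = (Ob H x).card * W H x + ∑ y ∈ Y \ Ob H x, W H y := by
  have hsub : Ob H x ⊆ Y := by
    intro y; simp only [Ob, Finset.mem_filter, Finset.mem_univ, true_and]
    rintro ⟨M, hM, rfl⟩; exact hY M hM x hx
  refine ⟨?_, ?_⟩
  · intro M hM y hy
    simp only [Ob, Finset.mem_sdiff, Finset.mem_filter, Finset.mem_univ, true_and] at hy ⊢
    refine ⟨hY M hM y hy.1, ?_⟩
    rintro ⟨g, hg, h⟩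
    exact hy.2 ⟨M⁻¹ * g, H.mul_mem (H.inv_mem hM) hg, by rw [mul_smul, h, inv_smul_smul]⟩
  · rw [← Finset.sum_sdiff hsub, add_comm]
    congr 1
    rw [← smul_eq_mul, ← Finset.sum_const]
    apply Finset.sum_congr rfl
    intro y hy
    simp only [Ob, Finset.mem_filter, Finset.mem_univ, true_and] at hy
    obtain ⟨M, hM, rfl⟩ := hy
    exact W_smul H x hM

/-- an element of order two in the stabilizer forces even order; every stabilizer is even -/
theorem two_dvd_S (h2 : (2 : F) ≠ 0) (H : Subgroup SL(2, F)) (hH : -1 ∈ H) (x : P1 F K) :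
    2 ∣ S H x := by
  have e : S H x = Nat.card (H ⊓ MulAction.stabilizer SL(2, F) x : Subgroup SL(2, F)) := by
    rw [S, ← Fintype.card_subtype, ← Nat.card_eq_fintype_card]
    rfl
  rw [e]
  have ho : orderOf (-1 : SL(2, F)) = 2 := by
    apply orderOf_eq_prime
    · simp
    · exact (one_ne_neg h2).symm
  refine ho.symm.dvd.trans ?_
  exact Subgroup.orderOf_dvd_natCard _ ⟨hH, neg_one_smul x⟩

theorem S_pos (H : Subgroup SL(2, F)) (x : P1 F K) : 0 < S H x :=
  Finset.card_pos.2 ⟨1, by simp [H.one_mem]⟩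

end count
end PSLFact

namespace PSLFact
set_option linter.unusedSectionVars false

section prime_to_p
variable {F K : Type*} [Field F] [Fintype F] [Field K] [Finite K] [Algebra F K]

open Classical

theorem S_eq (H : Subgroup SL(2, F)) (x : P1 F K) :
    S H x = Nat.card (H ⊓ MulAction.stabilizer SL(2, F) x : Subgroup SL(2, F)) := by
  rw [S, ← Fintype.card_subtype, ← Nat.card_eq_fintype_card]
  rfl

/-- rational points -/
def rat (x : P1 F K) : Prop := x = inf ∨ ∃ a : F, x = fin (algebraMap F K a)

theorem rat_smul (M : SL(2, F)) {x : P1 F K} (hx : rat x) : rat (M • x) := by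
  rcases hx with rfl | ⟨a, rfl⟩
  · rw [smul_inf]
    split_ifs
    · exact Or.inl rfl
    · exact Or.inr ⟨M 0 0 / M 1 0, by rw [map_div₀]⟩
  · rw [smul_fin]
    split_ifs
    · exact Or.inl rfl
    · exact Or.inr ⟨(M 0 0 * a + M 0 1) / (M 1 0 * a + M 1 1), by simp⟩

/-- special elements -/
def mkSL (a b c d : F) (h : a * d - b * c = 1) : SL(2, F) :=
  ⟨!![a, b; c, d], by rw [det_fin_two_of]; exact h⟩

theorem mkSL00 (a b c d : F) (h : a * d - b * c = 1) : (mkSL a b c d h) 0 0 = a := rfl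
theorem mkSL01 (a b c d : F) (h : a * d - b * c = 1) : (mkSL a b c d h) 0 1 = b := rfl
theorem mkSL10 (a b c d : F) (h : a * d - b * c = 1) : (mkSL a b c d h) 1 0 = c := rfl
theorem mkSL11 (a b c d : F) (h : a * d - b * c = 1) : (mkSL a b c d h) 1 1 = d := rfl

theorem mul00 (M N : SL(2, F)) : (M * N) 0 0 = M 0 0 * N 0 0 + M 0 1 * N 1 0 := by
  simp [Matrix.mul_apply, Fin.sum_univ_two]
theorem mul01 (M N : SL(2, F)) : (M * N) 0 1 = M 0 0 * N 0 1 + M 0 1 * N 1 1 := by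
  simp [Matrix.mul_apply, Fin.sum_univ_two]
theorem mul10 (M N : SL(2, F)) : (M * N) 1 0 = M 1 0 * N 0 0 + M 1 1 * N 1 0 := by
  simp [Matrix.mul_apply, Fin.sum_univ_two]
theorem mul11 (M N : SL(2, F)) : (M * N) 1 1 = M 1 0 * N 0 1 + M 1 1 * N 1 1 := by
  simp [Matrix.mul_apply, Fin.sum_univ_two]

theorem rat_trans {x : P1 F K} (hx : rat x) : ∃ M : SL(2, F), M • inf = x := by
  rcases hx with rfl | ⟨a, rfl⟩
  · exact ⟨1, one_smul _ _⟩
  · refine ⟨mkSL a (-1) 1 0 (by ring), ?_⟩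
    rw [smul_inf, mkSL10, mkSL00]
    simp

theorem card_rat : (Finset.univ.filter fun x : P1 F K => rat x).card = Fintype.card F + 1 := by
  rw [← Fintype.card_option]
  symm
  apply Finset.card_bij (s := (Finset.univ : Finset (Option F)))
    (fun (o : Option F) _ => (match o with
      | none => inf
      | some a => fin (algebraMap F K a) : P1 F K))
  · rintro (_ | a) _
    · exact Finset.mem_filter.2 ⟨Finset.mem_univ _, Or.inl rfl⟩
    · exact Finset.mem_filter.2 ⟨Finset.mem_univ _, Or.inr ⟨a, rfl⟩⟩
  · rintro (_ | a) _ (_ | b) _ h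
    · rfl
    · exact (fin_ne_inf h.symm).elim
    · exact (fin_ne_inf h).elim
    · have := (algebraMap F K).injective (fin_inj.1 h)
      rw [this]
  · intro x hx
    simp only [Finset.mem_filter, Finset.mem_univ, true_and] at hx
    rcases hx with rfl | ⟨a, rfl⟩
    · exact ⟨none, Finset.mem_univ _, rfl⟩
    · exact ⟨some a, Finset.mem_univ _, rfl⟩

theorem sq_one (h2 : (2 : F) ≠ 0) {M : SL(2, F)} (h : M * M = 1) : M = 1 ∨ M = -1 := by
  by_contra hne
  push Not at hne
  have e00 := congrArg (fun N : SL(2, F) => N 0 0) h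
  have e01 := congrArg (fun N : SL(2, F) => N 0 1) h
  have e10 := congrArg (fun N : SL(2, F) => N 1 0) h
  have e11 := congrArg (fun N : SL(2, F) => N 1 1) h
  simp only [mul00, mul01, mul10, mul11] at e00 e01 e10 e11
  simp at e00 e01 e10 e11
  have hd := det_eq M
  generalize ha : M 0 0 = a at *
  generalize hb : M 0 1 = b at *
  generalize hc : M 1 0 = c at *
  generalize hd' : M 1 1 = d at *
  have k1 : (a + d) * a = 2 := by linear_combination e00 + hd
  have k2 : (a + d) * d = 2 := by linear_combination e11 + hd
  have ht : a + d ≠ 0 := by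
    intro h0; rw [h0, zero_mul] at k1; exact h2 k1.symm
  have hb0 : b = 0 := by
    have : (a + d) * b = 0 := by linear_combination e01
    exact (mul_eq_zero.1 this).resolve_left ht
  have hc0 : c = 0 := by
    have : (a + d) * c = 0 := by linear_combination e10
    exact (mul_eq_zero.1 this).resolve_left ht
  have had : a = d := mul_left_cancel₀ ht (k1.trans k2.symm)
  exact ne_pm hne.1 hne.2 (hb.trans hb0) (hc.trans hc0) (by rw [ha, hd', had])

theorem exists_sq_neg (h2 : (2 : F) ≠ 0) (L : Subgroup SL(2, F)) (h4 : 4 ∣ Nat.card L) :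
    ∃ M ∈ L, M * M = -1 := by
  obtain ⟨P, hP⟩ := Sylow.exists_subgroup_card_pow_prime (G := L) 2 (n := 2) (by simpa using h4)
  have : ∃ M : L, M ∈ P ∧ M.1 ≠ 1 ∧ M.1 ≠ -1 := by
    by_contra hcon
    push Not at hcon
    have hle : Nat.card P ≤ Nat.card ({1, -1} : Finset SL(2, F)) := by
      apply Nat.card_le_card_of_injective
        (fun M : P => (⟨M.1.1, by
          by_cases h : M.1.1 = 1
          · simp [h]
          · simp [hcon M.1 M.2 h]⟩ : ({1, -1} : Finset SL(2, F))))
      intro M N h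
      simp only [Subtype.mk.injEq] at h
      exact Subtype.ext (Subtype.ext h)
    rw [hP, Nat.card_eq_fintype_card, Fintype.card_coe, Finset.card_pair (one_ne_neg h2)] at hle
    norm_num at hle
  obtain ⟨M, hM, h1, h1'⟩ := this
  refine ⟨M.1, M.2, ?_⟩
  have h4 : (⟨M, hM⟩ : P) ^ Nat.card P = 1 := pow_card_eq_one'
  rw [hP] at h4
  have h5 : (M.1 * M.1) * (M.1 * M.1) = 1 := by
    have := congrArg (fun N : P => N.1.1) h4
    simp at this
    rw [← this]; simp only [pow_succ, pow_zero, one_mul, mul_assoc]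
  rcases sq_one h2 h5 with h | h
  · rcases sq_one h2 h with h | h
    · exact (h1 h).elim
    · exact (h1' h).elim
  · exact h

theorem sq_neg_trace {M : SL(2, F)} (h : M * M = -1) : M 1 1 = - M 0 0 := by
  have e00 := congrArg (fun N : SL(2, F) => N 0 0) h
  have e01 := congrArg (fun N : SL(2, F) => N 0 1) h
  have e10 := congrArg (fun N : SL(2, F) => N 1 0) h
  have e11 := congrArg (fun N : SL(2, F) => N 1 1) h
  simp only [mul00, mul01, mul10, mul11] at e00 e01 e10 e11
  simp at e00 e01 e10 e11
  have hd := det_eq M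
  generalize M 0 0 = a at *
  generalize M 0 1 = b at *
  generalize M 1 0 = c at *
  generalize M 1 1 = d at *
  have h1 : a * (a + d) = 0 := by linear_combination e00 + hd
  have h2 : d * (a + d) = 0 := by linear_combination e11 + hd
  have h3 : b * (a + d) = 0 := by linear_combination e01
  have : (a + d) = 0 := by linear_combination -(a + d) * hd + d * h1 - c * h3
  linear_combination this

theorem sq_neg_rat (h2 : (2 : F) ≠ 0) (hi : ∃ i : F, i * i = -1) {M : SL(2, F)}
    (h : M * M = -1) {x : P1 F K} (hx : M • x = x) : rat x := by
  obtain ⟨i, hi⟩ := hi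
  have ht := sq_neg_trace h
  have hd := det_eq M
  have hd' := det_eq' (K := K) M
  rcases cases_pt x with rfl | ⟨y, rfl⟩
  · exact Or.inl rfl
  · right
    rw [smul_fin_iff] at hx
    rw [ht] at hd hd' hx
    simp only [map_neg] at hx hd'
    have hi' : algebraMap F K i * algebraMap F K i = -1 := by rw [← map_mul, hi]; simp
    by_cases hc : M 1 0 = 0
    · have ha : M 0 0 ≠ 0 := by
        intro h0; simp [h0, hc] at hd
      have ha' : algebraMap F K (M 0 0) ≠ 0 := (map_ne_zero _).2 ha
      have h2' : (2 : K) ≠ 0 := by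
        rw [← map_ofNat (algebraMap F K) 2]; exact (map_ne_zero (algebraMap F K)).2 h2
      refine ⟨- M 0 1 / (2 * M 0 0), ?_⟩
      rw [fin_inj]
      simp only [map_div₀, map_mul, map_neg, map_ofNat]
      rw [eq_div_iff (mul_ne_zero h2' ha')]
      rw [hc, map_zero] at hx
      linear_combination -hx
    · have hc' : algebraMap F K (M 1 0) ≠ 0 := (map_ne_zero _).2 hc
      have : (algebraMap F K (M 1 0) * y - algebraMap F K (M 0 0) - algebraMap F K i) *
        (algebraMap F K (M 1 0) * y - algebraMap F K (M 0 0) + algebraMap F K i) = 0 := by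
        linear_combination algebraMap F K (M 1 0) * hx - hd' - hi'
      rcases mul_eq_zero.1 this with h | h
      · refine ⟨(M 0 0 + i) / M 1 0, ?_⟩
        rw [fin_inj]
        simp only [map_div₀, map_add]
        rw [eq_div_iff hc']
        linear_combination h
      · refine ⟨(M 0 0 - i) / M 1 0, ?_⟩
        rw [fin_inj]
        simp only [map_div₀, map_sub]
        rw [eq_div_iff hc']
        linear_combination h

theorem sq_neg_fix (hi : ∃ i : F, i * i = -1) {M : SL(2, F)}
    (h : M * M = -1) : ∃ x : P1 F K, rat x ∧ M • x = x := by
  obtain ⟨i, hi⟩ := hi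
  have ht := sq_neg_trace h
  have hd := det_eq M
  have hd' := det_eq' (K := K) M
  have hi' : algebraMap F K i * algebraMap F K i = -1 := by rw [← map_mul, hi]; simp
  rw [ht] at hd hd'
  simp only [map_neg] at hd'
  by_cases hc : M 1 0 = 0
  · exact ⟨inf, Or.inl rfl, (smul_inf_iff M).2 hc⟩
  · have hc' : algebraMap F K (M 1 0) ≠ 0 := (map_ne_zero _).2 hc
    refine ⟨fin (algebraMap F K ((M 0 0 + i) / M 1 0)), Or.inr ⟨_, rfl⟩, ?_⟩
    rw [smul_fin_iff, ht]
    simp only [map_div₀, map_add, map_neg]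
    field_simp
    linear_combination hi' + hd'

theorem exists_i (hmod : Fintype.card F % 4 = 1) : ∃ i : F, i * i = -1 := by
  have := FiniteField.isSquare_neg_one_iff.2 (show Fintype.card F % 4 ≠ 3 by omega)
  obtain ⟨i, hi⟩ := this
  exact ⟨i, hi.symm⟩

theorem arith1 {q N s m1 s1 m2 s2 : ℕ} (h1 : N = (q + 1) * s) (hs : 4 ∣ s) (hs0 : 0 < s)
    (hm1 : m1 * s1 = N) (hm2 : m2 * s2 = N) (h6 : 6 ≤ s1) (h6' : 6 ≤ s2)
    (h2 : s1 % 4 = 2) (h2' : s2 % 4 = 2) (hN : N + 4 = 2 * m1 + 2 * m2 + 2 * (q + 1)) :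
    q = 5 ∨ q = 29 := by
  have a1 : 6 * m1 ≤ N := by nlinarith
  have a2 : 6 * m2 ≤ N := by nlinarith
  obtain ⟨t, rfl⟩ := hs
  have ht : t = 1 := by
    by_contra hne
    have : 2 ≤ t := by omega
    have : 8 * (q + 1) ≤ N := by nlinarith
    omega
  subst ht
  have key : ∀ m1 s1 m2 s2 : ℕ, s1 = 6 → m1 * s1 = 4 * (q + 1) → m2 * s2 = 4 * (q + 1) →
      s2 % 4 = 2 → 6 ≤ s2 → q + 3 = m1 + m2 → q = 5 ∨ q = 29 := by
    intro m1 s1 m2 s2 e f g h h6 k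
    subst e
    have : 3 * m2 = q + 7 := by omega
    have hlt : s2 < 12 := by
      by_contra hge
      have : 12 ≤ s2 := by omega
      nlinarith
    have : s2 = 6 ∨ s2 = 10 := by omega
    rcases this with rfl | rfl <;> omega
  by_cases e1 : s1 = 6
  · exact key m1 s1 m2 s2 e1 (by rw [hm1, h1]; ring) (by rw [hm2, h1]; ring) h2' h6' (by omega)
  by_cases e2 : s2 = 6
  · exact key m2 s2 m1 s1 e2 (by rw [hm2, h1]; ring) (by rw [hm1, h1]; ring) h2 h6 (by omega)
  exfalso
  have : 10 ≤ s1 := by omega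
  have : 10 ≤ s2 := by omega
  have : 10 * m1 ≤ N := by nlinarith
  have : 10 * m2 ≤ N := by nlinarith
  omega

theorem exists_pos_of_sum {H : Subgroup SL(2, F)} {Y : Finset (P1 F K)}
    (h : ∑ y ∈ Y, W H y ≠ 0) : ∃ x ∈ Y, W H x ≠ 0 := Finset.exists_ne_zero_of_sum_ne_zero h

theorem case_prime_to_p (hmod : Fintype.card F % 4 = 1) (h5 : Fintype.card F ≠ 5)
    (h29 : Fintype.card F ≠ 29) (h2 : (2 : F) ≠ 0)
    (hK : ∀ a : F, IsSquare (algebraMap F K a)) (H : Subgroup SL(2, F)) (hH : -1 ∈ H)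
    (hnp : ∀ M ∈ H, M ≠ 1 → M ≠ -1 → ¬ par M)
    (htr : ∀ x : P1 F K, rat x → ∃ M ∈ H, M • inf = x) : False := by
  have hi := exists_i hmod
  have hq1 := Fintype.one_lt_card (α := F)
  have hPP : ∀ x : P1 F K, PP H x = 0 := by
    intro x
    rw [PP, Finset.card_eq_zero, Finset.filter_eq_empty_iff]
    rintro M _ ⟨⟨⟨h1, h2, h3⟩, _⟩, h4⟩
    exact hnp M h1 h2 h3 h4
  have hW : ∀ x : P1 F K, W H x + 2 = S H x := by
    intro x; rw [W_eq h2 H hH, hPP, add_zero]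
  have hO : Ob H (inf : P1 F K) = Finset.univ.filter fun x : P1 F K => rat x := by
    ext x
    simp only [Ob, Finset.mem_filter, Finset.mem_univ, true_and]
    constructor
    · rintro ⟨M, _, rfl⟩; exact rat_smul M (Or.inl rfl)
    · exact htr x
  have hOc : (Ob H (inf : P1 F K)).card = Fintype.card F + 1 := by rw [hO, card_rat]
  have hN := card_Ob H (inf : P1 F K)
  rw [hOc] at hN
  have hs2 := two_dvd_S h2 H hH (inf : P1 F K)
  have hspos := S_pos H (inf : P1 F K)
  have hs4 : 4 ∣ S H (inf : P1 F K) := by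
    have h4 : 4 ∣ Nat.card H := by
      rw [← hN]
      exact mul_dvd_mul (show 2 ∣ Fintype.card F + 1 by omega) hs2
    obtain ⟨M, hM, hMM⟩ := exists_sq_neg h2 H h4
    obtain ⟨x, hx, hMx⟩ := sq_neg_fix (K := K) hi hMM
    obtain ⟨g, hg, rfl⟩ := htr x hx
    have hsq : (g⁻¹ * M * g) ^ 2 = -1 := by
      have : (g⁻¹ * M * g) ^ 2 = g⁻¹ * (M * M) * g := by rw [sq]; group
      rw [this, hMM]; simp
    have ho : orderOf (g⁻¹ * M * g) = 2 ^ (1 + 1) := by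
      apply orderOf_eq_prime_pow
      · simp only [pow_one]; rw [hsq]; exact (one_ne_neg h2).symm
      · rw [pow_succ, pow_one, pow_mul, hsq]; simp
    rw [S_eq]
    refine (show 4 ∣ orderOf (g⁻¹ * M * g) by rw [ho]; norm_num).trans (Subgroup.orderOf_dvd_natCard _ ⟨?_, ?_⟩)
    · exact H.mul_mem (H.mul_mem (H.inv_mem hg) hM) hg
    · show (g⁻¹ * M * g) • inf = inf
      rw [mul_smul, mul_smul, hMx, inv_smul_smul]
  have hodd : ∀ x : P1 F K, ¬ rat x → S H x % 4 = 2 := by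
    intro x hx
    have := two_dvd_S h2 H hH x
    by_contra hne
    have h4 : 4 ∣ S H x := by omega
    rw [S_eq] at h4
    obtain ⟨M, hM, hMM⟩ := exists_sq_neg h2 _ h4
    exact hx (sq_neg_rat h2 hi hMM hM.2)
  have hsum := sum_W h2 hK H hH
  obtain ⟨st1, p1⟩ := peel H (stable_univ H) (Finset.mem_univ (inf : P1 F K))
  rw [p1, hOc] at hsum
  have hW0 := hW inf
  have hN' : (Fintype.card F + 1) * W H (inf : P1 F K) + 2 * (Fintype.card F + 1) = Nat.card H := by
    rw [← hN, ← hW0]; ring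
  have hN4 : 4 * (Fintype.card F + 1) ≤ Nat.card H := by
    rw [← hN]; have := Nat.le_of_dvd hspos hs4; nlinarith
  have facts : ∀ x : P1 F K, ¬ rat x → W H x ≠ 0 → 6 ≤ S H x ∧ 6 * (Ob H x).card ≤ Nat.card H ∧
      (Ob H x).card * W H x + 2 * (Ob H x).card = Nat.card H := by
    intro x hx hx0
    have h1 := hodd x hx
    have h2 := hW x
    have h3 : 6 ≤ S H x := by omega
    have h4 := card_Ob H x
    refine ⟨h3, by rw [← h4]; nlinarith, by rw [← h4, ← h2]; ring⟩
  obtain ⟨x1, hx1, hx1'⟩ := exists_pos_of_sum (H := H) (Y := Finset.univ \ Ob H (inf : P1 F K))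
    (by omega)
  have hr1 : ¬ rat x1 := by simpa [hO] using hx1
  obtain ⟨f1, f1', f1''⟩ := facts x1 hr1 hx1'
  obtain ⟨st2, p2⟩ := peel H st1 hx1
  rw [p2] at hsum
  obtain ⟨x2, hx2, hx2'⟩ := exists_pos_of_sum (H := H)
    (Y := (Finset.univ \ Ob H (inf : P1 F K)) \ Ob H x1) (by omega)
  have hr2 : ¬ rat x2 := by
    have := (Finset.mem_sdiff.1 hx2).1
    simpa [hO] using this
  obtain ⟨f2, f2', f2''⟩ := facts x2 hr2 hx2'
  obtain ⟨st3, p3⟩ := peel H st2 hx2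
  rw [p3] at hsum
  have hz : ∑ y ∈ (((Finset.univ \ Ob H (inf : P1 F K)) \ Ob H x1) \ Ob H x2), W H y = 0 := by
    by_contra hne
    obtain ⟨x3, hx3, hx3'⟩ := exists_pos_of_sum hne
    have hr3 : ¬ rat x3 := by
      have := (Finset.mem_sdiff.1 (Finset.mem_sdiff.1 hx3).1).1
      simpa [hO] using this
    obtain ⟨f3, f3', f3''⟩ := facts x3 hr3 hx3'
    obtain ⟨st4, p4⟩ := peel H st3 hx3
    rw [p4] at hsum
    omega
  rw [hz] at hsum
  rcases arith1 hN.symm hs4 hspos (card_Ob H x1) (card_Ob H x2) f1 f2 (hodd x1 hr1) (hodd x2 hr2)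
    (by omega) with h | h
  · exact h5 h
  · exact h29 h

end prime_to_p
end PSLFact

namespace PSLFact
set_option linter.unusedSectionVars false

set_option maxHeartbeats 2000000 in
theorem arith2 {h k n c : ℕ} (hh : 3 ≤ h) (hk0 : 1 ≤ k) (hk : k ∣ h - 1) (hn : h + 1 ≤ n)
    (hc : 2 ≤ c) (e : h * k * n = c * (2 + n * (h - 2))) :
    (n = h + 1 ∧ (2 * k = h - 1 ∨ k = h - 1)) ∨ (h = 3 ∧ k = 2 ∧ n = 10) := by
  obtain ⟨j, rfl⟩ : ∃ j, h = j + 2 := ⟨h - 2, by omega⟩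
  rw [Nat.add_sub_cancel] at e
  have hj1 : j + 2 - 1 = j + 1 := by omega
  rw [hj1] at hk ⊢
  obtain ⟨t, ht⟩ := hk
  have hlt : c * j < (j + 2) * k := by
    by_contra hge
    push Not at hge
    have : n * ((j + 2) * k) ≤ n * (c * j) := Nat.mul_le_mul_left _ hge
    nlinarith
  obtain ⟨D, hD⟩ := Nat.exists_eq_add_of_lt hlt
  have hnD : n * (D + 1) = 2 * c := by
    have : n * ((j + 2) * k) = n * (c * j + D + 1) := by rw [hD]
    nlinarith
  have h2c : j + 3 ≤ 2 * c := by nlinarith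
  have ht0 : 1 ≤ t := by
    rcases Nat.eq_zero_or_pos t with h | h
    · subst h; omega
    · exact h
  have ht2 : t ≤ 2 := by
    by_contra hge
    have h3 : 3 ≤ t := by omega
    have h3k : 3 * k ≤ j + 1 := by rw [ht]; nlinarith
    have : (j + 3) * j ≤ 2 * c * j := Nat.mul_le_mul_right _ h2c
    have : 3 * ((j + 2) * k) ≤ (j + 2) * (j + 1) := by nlinarith
    have : 3 * ((j + 3) * j) < 2 * ((j + 2) * (j + 1)) := by nlinarith
    have : j = 1 := by nlinarith
    subst this
    omega
  have : t = 1 ∨ t = 2 := by omega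
  rcases this with rfl | rfl
  · have hk' : k = j + 1 := by omega
    subst hk'
    rcases lt_trichotomy c (j + 3) with h | h | h
    · exfalso
      have hc' : c ≤ j + 2 := by omega
      have : c * j ≤ (j + 2) * j := Nat.mul_le_mul_right _ hc'
      have hD' : j + 2 ≤ D + 1 := by nlinarith
      have : n * (j + 2) ≤ n * (D + 1) := Nat.mul_le_mul_left _ hD'
      nlinarith
    · left
      subst h
      have hD' : D = 1 := by nlinarith
      subst hD'
      exact ⟨by omega, Or.inr rfl⟩
    · right
      have hc' : j + 4 ≤ c := h
      have : (j + 4) * j ≤ c * j := Nat.mul_le_mul_right _ hc'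
      have : j ≤ 1 := by nlinarith
      have : j = 1 := by omega
      subst this
      have : c = 5 := by omega
      subst this
      have : D = 0 := by omega
      subst this
      omega
  · left
    have h1 : c * (2 * j) < (j + 2) * (j + 1) := by nlinarith
    have hc' : 2 * c = j + 3 := by
      have : 2 * c < j + 5 := by
        by_contra hge
        push Not at hge
        nlinarith
      have : 2 * c ≠ j + 4 := by
        intro h
        have : 2 * ((j + 2) * k) = (j + 4) * j + 2 * D + 2 := by rw [hD]; nlinarith
        nlinarith
      omega
    have a : 2 * ((j + 2) * k) = (j + 2) * (j + 1) := by rw [ht]; ring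
    have b : 2 * (c * j) = (j + 3) * j := by rw [← hc']; ring
    have hD' : D = 0 := by
      rw [hD] at a
      ring_nf at a b
      omega
    subst hD'
    exact ⟨by omega, Or.inl (by omega)⟩

end PSLFact

namespace PSLFact
set_option linter.unusedSectionVars false
section modp
variable {F K : Type*} [Field F] [Fintype F] [Field K] [Finite K] [Algebra F K]

open Classical

theorem modEq_fix {p : ℕ} [Fact p.Prime] {M : SL(2, F)} (hM : M ^ p = 1) {Y : Finset (P1 F K)}
    (hY : ∀ y ∈ Y, M • y ∈ Y) : Y.card ≡ (Y.filter fun y => M • y = y).card [MOD p] := by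
  let f : Function.End Y := fun y => ⟨M • y.1, hY _ y.2⟩
  have hfn : ∀ n : ℕ, ∀ y : Y, ((f ^ n) y).1 = M ^ n • y.1 := by
    intro n
    induction n with
    | zero => intro y; rw [pow_zero, pow_zero, one_smul]; rfl
    | succ n ih =>
      intro y
      rw [pow_succ, pow_succ, mul_smul]
      exact ih (f y)
  have hf : f ^ p ^ 1 = 1 := by
    funext y
    apply Subtype.ext
    rw [hfn, pow_one, hM, one_smul]; rfl
  have h := Equiv.Perm.card_fixedPoints_modEq (p := p) (n := 1) (f := f) hf
  rw [Fintype.card_coe] at h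
  refine h.trans ?_
  refine congrArg (· % p) (?_ : _ = _)
  rw [← Fintype.card_coe]
  apply Fintype.card_congr
  refine ⟨fun y => ⟨y.1.1, ?_⟩, fun y => ⟨⟨y.1, (Finset.mem_filter.1 y.2).1⟩, ?_⟩, ?_, ?_⟩
  · rw [Finset.mem_filter]
    exact ⟨y.1.2, congrArg Subtype.val y.2⟩
  · apply Subtype.ext
    exact (Finset.mem_filter.1 y.2).2
  · intro y; rfl
  · intro y; rfl

theorem tr_pow {M : SL(2, F)} (h : M 0 0 + M 1 1 = 2) (n : ℕ) :
    (M ^ n) 0 0 = 1 + n * (M 0 0 - 1) ∧ (M ^ n) 0 1 = n * M 0 1 ∧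
    (M ^ n) 1 0 = n * M 1 0 ∧ (M ^ n) 1 1 = 1 + n * (M 1 1 - 1) := by
  have hd := det_eq M
  induction n with
  | zero => simp
  | succ n ih =>
    obtain ⟨h1, h2, h3, h4⟩ := ih
    rw [pow_succ, mul00, mul01, mul10, mul11, h1, h2, h3, h4]
    push_cast
    generalize M 0 0 = a at *
    generalize M 0 1 = b at *
    generalize M 1 0 = c at *
    generalize M 1 1 = d at *
    obtain rfl : d = 2 - a := by rw [← h]; ring
    refine ⟨?_, ?_, ?_, ?_⟩
    · linear_combination (-n : F) * hd
    · ring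
    · ring
    · linear_combination (-n : F) * hd

theorem tr_pow_p {p : ℕ} [CharP F p] {M : SL(2, F)} (h : M 0 0 + M 1 1 = 2) : M ^ p = 1 := by
  obtain ⟨h1, h2, h3, h4⟩ := tr_pow h p
  simp only [CharP.cast_eq_zero, zero_mul, add_zero] at h1 h2 h3 h4
  apply ext4 <;> simp [h1, h2, h3, h4]

theorem par_cases {M : SL(2, F)} (h : par M) :
    M 0 0 + M 1 1 = 2 ∨ (-M) 0 0 + (-M) 1 1 = 2 := by
  have : (M 0 0 + M 1 1 - 2) * (M 0 0 + M 1 1 + 2) = 0 := by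
    have := h; rw [par] at this; linear_combination this
  rcases mul_eq_zero.1 this with h | h
  · left; linear_combination h
  · right
    have e1 : (-M) 0 0 = - M 0 0 := by simp
    have e2 : (-M) 1 1 = - M 1 1 := by simp
    rw [e1, e2]; linear_combination -h

theorem par_dvd {p : ℕ} [hp : Fact p.Prime] [CharP F p] {H : Subgroup SL(2, F)} (hH : -1 ∈ H)
    {M : SL(2, F)} (hM : M ∈ H) (h1 : M ≠ 1) (h2 : M ≠ -1) (h : par M) : p ∣ Nat.card H := by
  rcases par_cases h with h | h
  · rw [← orderOf_eq_prime (tr_pow_p (p := p) h) h1]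
    exact Subgroup.orderOf_dvd_natCard _ hM
  · have : -M ≠ 1 := by
      intro h; apply h2; rw [← h, neg_neg]
    rw [← orderOf_eq_prime (tr_pow_p (p := p) h) this]
    apply Subgroup.orderOf_dvd_natCard
    have := H.mul_mem hH hM
    simpa using this

theorem card_P1 : Fintype.card (P1 F K) = Nat.card K + 1 := by
  rw [← Nat.card_eq_fintype_card]
  exact Finite.card_option (α := K)

theorem p_dvd_K {p : ℕ} [CharP F p] : p ∣ Nat.card K := by
  have : CharP K p := charP_of_injective_algebraMap (algebraMap F K).injective p
  have := Fintype.ofFinite K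
  rw [Nat.card_eq_fintype_card]
  exact (CharP.cast_eq_zero_iff K p _).1 (Nat.cast_card_eq_zero K)

theorem p_dvd_F {p : ℕ} [CharP F p] : p ∣ Fintype.card F :=
  (CharP.cast_eq_zero_iff F p _).1 (Nat.cast_card_eq_zero F)

theorem order_p_par {p : ℕ} [hp : Fact p.Prime] [CharP F p] (h2 : (2 : F) ≠ 0)
    (hK : ∀ a : F, IsSquare (algebraMap F K a)) {M : SL(2, F)} (hM : M ^ p = 1)
    (h1 : M ≠ 1) (h1' : M ≠ -1) : par M := by
  by_contra hpar
  have h := modEq_fix (K := K) hM (Y := Finset.univ) (fun _ _ => Finset.mem_univ _)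
  rw [card_fix h2 hK M h1 h1', if_neg hpar, Finset.card_univ, card_P1] at h
  have h3 : Nat.card K ≡ 1 [MOD p] := Nat.ModEq.add_right_cancel' 1 h
  have h4 : 0 ≡ 1 [MOD p] := ((Nat.modEq_zero_iff_dvd.2 (p_dvd_K (F := F) (K := K))).symm).trans h3
  have := (Nat.modEq_iff_dvd' (by norm_num)).1 h4
  exact hp.1.one_lt.ne' (Nat.dvd_one.1 (by simpa using this))

theorem order_p_rat {p : ℕ} [hp : Fact p.Prime] [CharP F p] {M : SL(2, F)} (hM : M ^ p = 1) :
    ∃ x : P1 F K, rat x ∧ M • x = x := by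
  have h := modEq_fix (K := K) hM (Y := Finset.univ.filter fun x => rat x)
    (fun y hy => by
      simp only [Finset.mem_filter, Finset.mem_univ, true_and] at hy ⊢
      exact rat_smul M hy)
  rw [card_rat] at h
  by_contra hno
  push Not at hno
  have h0 : ((Finset.univ.filter fun x : P1 F K => rat x).filter fun y => M • y = y).card = 0 := by
    rw [Finset.card_eq_zero, Finset.filter_eq_empty_iff]
    intro x hx
    exact hno x (by simpa using hx)
  rw [h0] at h
  have h1 := Nat.modEq_zero_iff_dvd.1 h
  have h2 := (Nat.dvd_add_right (p_dvd_F (F := F) (p := p))).1 h1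
  exact hp.1.one_lt.ne' (Nat.dvd_one.1 h2)

/-- translations -/
def T (b : F) : SL(2, F) := mkSL 1 b 0 1 (by ring)

theorem T_add (a b : F) : T (a + b) = T a * T b := by
  apply ext4 <;> simp [mul00, mul01, mul10, mul11, T, mkSL00, mkSL01, mkSL10, mkSL11, add_comm]

theorem T_zero : T (0 : F) = 1 := by
  apply ext4 <;> simp [T, mkSL00, mkSL01, mkSL10, mkSL11]

theorem T_neg (a : F) : T (-a) = (T a)⁻¹ := by
  rw [eq_inv_iff_mul_eq_one, ← T_add]; simp [T_zero]

theorem T_inj {a b : F} (h : T a = T b) : a = b := by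
  have := congrArg (fun M : SL(2, F) => M 0 1) h
  exact this

theorem T_inf (a : F) : T a • (inf : P1 F K) = inf := (smul_inf_iff _).2 rfl

theorem T_fin (a : F) (x : K) : T a • (fin x : P1 F K) = fin (x + algebraMap F K a) := by
  rw [smul_fin]
  simp [T, mkSL00, mkSL01, mkSL10, mkSL11]

end modp
end PSLFact

namespace PSLFact
set_option linter.unusedSectionVars false
section structure_inf
variable {F K : Type*} [Field F] [Fintype F] [Field K] [Finite K] [Algebra F K]

open Classical

/-- the translations in `H` -/
def U (H : Subgroup SL(2, F)) : AddSubgroup F where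
  carrier := {b | T b ∈ H}
  add_mem' := by
    intro a b ha hb
    show T (a + b) ∈ H
    rw [T_add]; exact H.mul_mem ha hb
  zero_mem' := by
    show T 0 ∈ H
    rw [T_zero]; exact H.one_mem
  neg_mem' := by
    intro a ha
    show T (-a) ∈ H
    rw [T_neg]; exact H.inv_mem ha

theorem mem_U {H : Subgroup SL(2, F)} {b : F} : b ∈ U H ↔ T b ∈ H := Iff.rfl

theorem card_U (H : Subgroup SL(2, F)) :
    (Finset.univ.filter fun b : F => b ∈ U H).card = Nat.card (U H) := by
  rw [Nat.card_eq_fintype_card, Fintype.card_subtype]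

theorem U_top {H : Subgroup SL(2, F)} (hU : ∀ b, T b ∈ H) {M : SL(2, F)} (hM : M ∈ H)
    (hc : M 1 0 ≠ 0) : H = ⊤ := by
  have key : ∀ g : SL(2, F), g 1 0 = M 1 0 → g ∈ H := by
    intro g hg
    have : g = T ((g 0 0 - M 0 0) / M 1 0) * M * T ((g 1 1 - M 1 1) / M 1 0) := by
      have d1 := det_eq g
      have d2 := det_eq M
      rw [hg] at d1
      apply ext4 <;> simp only [mul00, mul01, mul10, mul11, T, mkSL00, mkSL01, mkSL10, mkSL11]
      · field_simp; ring
      · field_simp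
        linear_combination d2 - d1
      · rw [hg]; ring
      · field_simp; ring
    rw [this]
    exact H.mul_mem (H.mul_mem (hU _) hM) (hU _)
  have key2 : ∀ g : SL(2, F), g 1 0 ≠ 0 → g ∈ H := by
    intro g hg
    have hd : (0 : F) * ((M 1 0 - M 1 0 * g 0 0) / g 1 0) - (-(M 1 0)⁻¹) * M 1 0 = 1 := by
      field_simp; ring
    have h1 := key (mkSL 0 (-(M 1 0)⁻¹) (M 1 0) ((M 1 0 - M 1 0 * g 0 0) / g 1 0) hd) rfl
    have h2 := key (mkSL 0 (-(M 1 0)⁻¹) (M 1 0) ((M 1 0 - M 1 0 * g 0 0) / g 1 0) hd * g) (by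
      rw [mul10, mkSL10, mkSL11]; field_simp; ring)
    have := H.mul_mem (H.inv_mem h1) h2
    rwa [inv_mul_cancel_left] at this
  rw [eq_top_iff]
  rintro g -
  by_cases hg : g 1 0 = 0
  · have h0 : g 0 0 ≠ 0 := by
      intro h
      have := det_eq g
      rw [hg, h] at this
      simp at this
    have h2 := key2 (M * g) (by rw [mul10, hg]; simp [hc, h0])
    have := H.mul_mem (H.inv_mem hM) h2
    rwa [inv_mul_cancel_left] at this
  · exact key2 g hg

/-- upper triangular subgroup of H -/
def Bo (H : Subgroup SL(2, F)) : Subgroup SL(2, F) where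
  carrier := {M | M ∈ H ∧ M 1 0 = 0}
  one_mem' := ⟨H.one_mem, by simp⟩
  mul_mem' := by
    rintro a b ⟨h1, h2⟩ ⟨h3, h4⟩
    exact ⟨H.mul_mem h1 h3, by rw [mul10, h2, h4]; ring⟩
  inv_mem' := by
    rintro a ⟨h1, h2⟩
    refine ⟨H.inv_mem h1, ?_⟩
    rw [Matrix.SpecialLinearGroup.coe_inv, Matrix.adjugate_fin_two]
    simp [h2]

theorem S_inf (H : Subgroup SL(2, F)) : S H (inf : P1 F K) = Nat.card (Bo H) := by
  rw [S_eq]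
  congr 2
  ext M
  rw [Subgroup.mem_inf, MulAction.mem_stabilizer_iff, smul_inf_iff]; rfl

theorem Bo_det {H : Subgroup SL(2, F)} (M : Bo H) : M.1 0 0 * M.1 1 1 = 1 := by
  have := det_eq M.1
  rw [M.2.2] at this
  linear_combination this

/-- the diagonal character -/
def chi (H : Subgroup SL(2, F)) : Bo H →* Fˣ where
  toFun M := ⟨M.1 0 0, M.1 1 1, Bo_det M, by rw [mul_comm]; exact Bo_det M⟩
  map_one' := by ext; simp
  map_mul' := by
    intro M N
    ext
    show (M.1 * N.1) 0 0 = M.1 0 0 * N.1 0 0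
    rw [mul00, N.2.2]; ring

theorem chi_val (H : Subgroup SL(2, F)) (M : Bo H) : (chi H M : F) = M.1 0 0 := rfl

theorem card_ker_chi (H : Subgroup SL(2, F)) : Nat.card (chi H).ker = Nat.card (U H) := by
  refine Nat.card_congr ⟨fun M => ⟨M.1.1 0 1, ?_⟩, fun b => ⟨⟨T b.1, b.2, rfl⟩, ?_⟩, ?_, ?_⟩
  · have h : M.1.1 0 0 = 1 := by
      have := congrArg (Units.val) (MonoidHom.mem_ker.1 M.2)
      exact this
    have h' : M.1.1 1 1 = 1 := by
      have := Bo_det M.1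
      rwa [h, one_mul] at this
    have : T (M.1.1 0 1) = M.1.1 := by
      apply ext4
      · exact h.symm
      · rfl
      · exact M.1.2.2.symm
      · exact h'.symm
    rw [mem_U, this]
    exact M.1.2.1
  · rw [MonoidHom.mem_ker]; ext; rfl
  · intro M
    have h : M.1.1 0 0 = 1 := by
      have := congrArg (Units.val) (MonoidHom.mem_ker.1 M.2)
      exact this
    have h' : M.1.1 1 1 = 1 := by
      have := Bo_det M.1
      rwa [h, one_mul] at this
    apply Subtype.ext
    apply Subtype.ext
    apply ext4
    · exact h.symm
    · rfl
    · exact M.1.2.2.symm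
    · exact h'.symm
  · intro b; rfl

/-- squares of diagonal entries -/
def D2 (H : Subgroup SL(2, F)) : Subgroup Fˣ := (chi H).range.map (powMonoidHom 2)

theorem card_hom {G G' : Type*} [Group G] [Group G'] (f : G →* G') :
    Nat.card G = Nat.card f.ker * Nat.card f.range := by
  rw [← Subgroup.index_ker, Subgroup.card_mul_index]

theorem card_range_chi (h2 : (2 : F) ≠ 0) (H : Subgroup SL(2, F)) (hH : -1 ∈ H) :
    Nat.card (chi H).range = 2 * Nat.card (D2 H) := by
  have h := card_hom ((powMonoidHom 2 : Fˣ →* Fˣ).comp (chi H).range.subtype)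
  have hr : ((powMonoidHom 2 : Fˣ →* Fˣ).comp (chi H).range.subtype).range = D2 H := by
    rw [MonoidHom.range_comp, Subgroup.range_subtype]; rfl
  rw [hr] at h
  rw [h]
  congr 1
  have hm : (-1 : Fˣ) ∈ (chi H).range := by
    refine ⟨⟨-1, hH, by simp⟩, ?_⟩
    ext; rw [chi_val]; simp
  rw [Nat.card_eq_two_iff]
  refine ⟨⟨1, Subgroup.one_mem _⟩, ⟨⟨-1, hm⟩, ?_⟩, ?_, ?_⟩
  · rw [MonoidHom.mem_ker]; simp
  · intro h
    have h' : (1 : Fˣ) = -1 := congrArg (fun z => (z.1.1 : Fˣ)) h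
    have := congrArg Units.val h'
    simp only [Units.val_one, Units.val_neg] at this
    apply h2
    linear_combination this
  · rw [Set.eq_univ_iff_forall]
    rintro ⟨⟨z, hz⟩, hz'⟩
    rw [MonoidHom.mem_ker] at hz'
    have h1 : z ^ 2 = 1 := hz'
    have h1 : (z : F) ^ 2 = 1 := by
      have := congrArg Units.val h1
      simpa using this
    rcases mul_self_eq_one_iff.1 ((sq (z : F)).symm.trans h1) with h | h
    · left; apply Subtype.ext; apply Subtype.ext; ext; exact h
    · right; apply Subtype.ext; apply Subtype.ext; ext; simpa using h

open scoped Pointwise in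
theorem card_D2_dvd (H : Subgroup SL(2, F)) : Nat.card (D2 H) ∣ Nat.card (U H) - 1 := by
  let t : Set Fˣ := {u | (u : F) ∈ U H}
  have htt : t * (D2 H : Set Fˣ) = t := by
    apply Set.Subset.antisymm
    · rintro _ ⟨u, hu, _, ⟨_, ⟨M, rfl⟩, rfl⟩, rfl⟩
      show ((u * (powMonoidHom 2) (chi H M) : Fˣ) : F) ∈ U H
      have e : ((u * (powMonoidHom 2) (chi H M) : Fˣ) : F) = M.1 0 0 ^ 2 * u := by
        simp [chi_val, mul_comm]
      rw [e, mem_U]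
      have hd := Bo_det M
      have : T (M.1 0 0 ^ 2 * u) = M.1 * T (u : F) * (M.1)⁻¹ := by
        rw [eq_mul_inv_iff_mul_eq]
        have h0 := M.2.2
        apply ext4 <;> simp only [mul00, mul01, mul10, mul11, T, mkSL00, mkSL01, mkSL10, mkSL11, h0]
        · ring
        · linear_combination (M.1 0 0 * u) * hd
        · ring
        · ring
      rw [this]
      exact H.mul_mem (H.mul_mem M.2.1 hu) (H.inv_mem M.2.1)
    · intro u hu
      exact ⟨u, hu, 1, Subgroup.one_mem _, mul_one u⟩
  have hcard := Subgroup.card_mul_eq_card_subgroup_mul_card_quotient (D2 H) t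
  rw [htt] at hcard
  have ht : Nat.card t = Nat.card (U H) - 1 := by
    have e : t ≃ {b : U H // b ≠ 0} :=
      ⟨fun u => ⟨⟨u.1, u.2⟩, fun h => u.1.ne_zero (congrArg Subtype.val h)⟩,
       fun b => ⟨Units.mk0 b.1.1 (fun h => b.2 (Subtype.ext h)), b.1.2⟩,
       fun u => by apply Subtype.ext; ext; rfl, fun b => rfl⟩
    rw [Nat.card_congr e, Nat.card_eq_fintype_card, Nat.card_eq_fintype_card]
    rw [Fintype.card_subtype_compl, Fintype.card_subtype_eq]
  rw [← ht, hcard]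
  exact Dvd.intro _ rfl

theorem S_inf_eq (h2 : (2 : F) ≠ 0) (H : Subgroup SL(2, F)) (hH : -1 ∈ H) :
    S H (inf : P1 F K) = 2 * Nat.card (U H) * Nat.card (D2 H) := by
  rw [S_inf, card_hom (chi H), card_ker_chi, card_range_chi h2 H hH]; ring

theorem D2_dvd_q (h2 : (2 : F) ≠ 0) (H : Subgroup SL(2, F)) (hH : -1 ∈ H) :
    2 * Nat.card (D2 H) ∣ Fintype.card F - 1 := by
  rw [← card_range_chi h2 H hH, ← Fintype.card_units, ← Nat.card_eq_fintype_card]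
  exact Subgroup.card_subgroup_dvd_card _

theorem neg00 (M : SL(2, F)) : (-M) 0 0 = - M 0 0 := by simp
theorem neg01 (M : SL(2, F)) : (-M) 0 1 = - M 0 1 := by simp
theorem neg10 (M : SL(2, F)) : (-M) 1 0 = - M 1 0 := by simp
theorem neg11 (M : SL(2, F)) : (-M) 1 1 = - M 1 1 := by simp

theorem tr2_T {M : SL(2, F)} (h0 : M 1 0 = 0) (h : M 0 0 + M 1 1 = 2) : M = T (M 0 1) := by
  have hd := det_eq M
  rw [h0] at hd
  have h11 : M 1 1 = 2 - M 0 0 := by rw [← h]; ring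
  have : (M 0 0 - 1) ^ 2 = 0 := by
    rw [h11] at hd
    linear_combination -hd
  have h00 : M 0 0 = 1 := by
    have := pow_eq_zero_iff (two_ne_zero) |>.1 this
    linear_combination this
  apply ext4
  · exact h00
  · rfl
  · exact h0
  · show M 1 1 = 1
    rw [h11, h00]; ring

theorem neg_mem' {H : Subgroup SL(2, F)} (hH : -1 ∈ H) {M : SL(2, F)} (hM : M ∈ H) : -M ∈ H := by
  have := H.mul_mem hH hM
  simpa using this

theorem PP_inf_eq (h2 : (2 : F) ≠ 0) (H : Subgroup SL(2, F)) (hH : -1 ∈ H) :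
    PP H (inf : P1 F K) = 2 * (Nat.card (U H) - 1) := by
  set Y := (Finset.univ.filter fun b : F => b ∈ U H).erase 0 with hYd
  have hY : Y.card = Nat.card (U H) - 1 := by
    rw [hYd, Finset.card_erase_of_mem, card_U]
    simp
  have hne : ∀ a b : F, T a ≠ - T b := by
    intro a b h
    have := congrArg (fun M : SL(2, F) => M 0 0) h
    simp only [neg00] at this
    have h' : (1 : F) = -1 := this
    apply h2; linear_combination h'
  have hset : (Finset.univ.filter fun M : SL(2, F) =>
      ((M ∈ H ∧ M ≠ 1 ∧ M ≠ -1) ∧ M • (inf : P1 F K) = inf) ∧ par M) =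
      Y.image T ∪ Y.image (fun b => - T b) := by
    ext M
    simp only [Finset.mem_filter, Finset.mem_univ, true_and, Finset.mem_union, Finset.mem_image,
      hYd, Finset.mem_erase]
    rw [smul_inf_iff]
    constructor
    · rintro ⟨⟨⟨h1, h3, h4⟩, h5⟩, h6⟩
      rcases par_cases h6 with h | h
      · left
        have e := tr2_T h5 h
        refine ⟨M 0 1, ⟨?_, ?_⟩, e.symm⟩
        · intro h0; rw [h0, T_zero] at e; exact h3 e
        · rw [mem_U, ← e]; exact h1
      · right
        have e := tr2_T (M := -M) (by rw [neg10, h5, neg_zero]) h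
        refine ⟨(-M) 0 1, ⟨?_, ?_⟩, by rw [← e, neg_neg]⟩
        · intro h0; rw [h0, T_zero] at e; exact h4 (by rw [← e, neg_neg])
        · rw [mem_U, ← e]; exact neg_mem' hH h1
    · rintro (⟨b, ⟨hb0, hb⟩, rfl⟩ | ⟨b, ⟨hb0, hb⟩, rfl⟩)
      · refine ⟨⟨⟨hb, ?_, ?_⟩, rfl⟩, ?_⟩
        · intro h; apply hb0; apply T_inj; rw [h, T_zero]
        · rw [← T_zero]; exact hne _ _
        · show ((1 : F) + 1) ^ 2 = 4
          ring
      · refine ⟨⟨⟨neg_mem' hH hb, ?_, ?_⟩, ?_⟩, ?_⟩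
        · rw [← T_zero]; exact (hne _ _).symm
        · intro h; apply hb0; apply T_inj; rw [T_zero]; exact neg_injective h
        · rw [neg10]; show -(0 : F) = 0; exact neg_zero
        · rw [par, neg00, neg11]
          show (-(1 : F) + -1) ^ 2 = 4
          ring
  rw [PP, hset, Finset.card_union_of_disjoint, Finset.card_image_of_injective,
    Finset.card_image_of_injective, hY]
  · ring
  · intro a b h; exact T_inj (neg_injective h)
  · intro a b h; exact T_inj h
  · rw [Finset.disjoint_left]
    intro M h1 h3
    obtain ⟨a, _, rfl⟩ := Finset.mem_image.1 h1
    obtain ⟨b, _, h⟩ := Finset.mem_image.1 h3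
    exact hne a b h.symm

theorem Ob_ge (H : Subgroup SL(2, F)) {M : SL(2, F)} (hM : M ∈ H) (hc : M 1 0 ≠ 0) :
    Nat.card (U H) + 1 ≤ (Ob H (inf : P1 F K)).card := by
  obtain ⟨y, hy⟩ : ∃ y : K, M • (inf : P1 F K) = fin y := by
    rcases cases_pt (M • (inf : P1 F K)) with h | h
    · exact absurd ((smul_inf_iff M).1 h) hc
    · exact h
  set Y := (Finset.univ.filter fun b : F => b ∈ U H).image
    (fun b => (fin (y + algebraMap F K b) : P1 F K)) with hYd
  have hY : Y.card = Nat.card (U H) := by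
    rw [hYd, Finset.card_image_of_injective, card_U]
    intro a b h
    have := add_left_cancel (fin_inj.1 h)
    exact (algebraMap F K).injective this
  have hi : (inf : P1 F K) ∉ Y := by
    intro h
    obtain ⟨b, _, h⟩ := Finset.mem_image.1 h
    exact fin_ne_inf h
  rw [← hY, ← Finset.card_insert_of_notMem hi]
  apply Finset.card_le_card
  intro x hx
  rcases Finset.mem_insert.1 hx with rfl | hx
  · exact mem_Ob_self H _
  · obtain ⟨b, hb, rfl⟩ := Finset.mem_image.1 hx
    simp only [Finset.mem_filter, Finset.mem_univ, true_and] at hb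
    rw [Ob, Finset.mem_filter]
    refine ⟨Finset.mem_univ _, T b * M, H.mul_mem hb hM, ?_⟩
    rw [mul_smul, hy, T_fin]

end structure_inf
end PSLFact

namespace PSLFact
set_option linter.unusedSectionVars false
section vone
variable {F K : Type*} [Field F] [Fintype F] [Field K] [Finite K] [Algebra F K]

open Classical

theorem par_in_Ob {p : ℕ} [hp : Fact p.Prime] [CharP F p] (h2 : (2 : F) ≠ 0)
    (hK : ∀ a : F, IsSquare (algebraMap F K a)) (H : Subgroup SL(2, F))
    {b : F} (hb : b ≠ 0) (hTb : T b ∈ H) {x : P1 F K} (hx : PP H x ≠ 0) :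
    x ∈ Ob H (inf : P1 F K) := by
  by_contra hxO
  have hst : ∀ M ∈ H, ∀ y ∈ Ob H (inf : P1 F K), M • y ∈ Ob H (inf : P1 F K) := by
    intro M hM y hy
    rw [Ob, Finset.mem_filter] at hy ⊢
    obtain ⟨_, g, hg, rfl⟩ := hy
    exact ⟨Finset.mem_univ _, M * g, H.mul_mem hM hg, mul_smul _ _ _⟩
  have main : ∀ M : SL(2, F), M ^ p = 1 → (∀ y ∈ Ob H (inf : P1 F K), M • y ∈ Ob H (inf : P1 F K)) →
      M ≠ 1 → M ≠ -1 → par M → ∀ z : P1 F K, M • z = z →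
      (Ob H (inf : P1 F K)).card ≡ (if z ∈ Ob H (inf : P1 F K) then 1 else 0) [MOD p] := by
    intro M hMp hM h1 h1' hpar z hz
    refine (modEq_fix hMp hM).trans ?_
    have hf := card_fix h2 hK M h1 h1'
    rw [if_pos hpar, Finset.card_eq_one] at hf
    obtain ⟨w, hw⟩ := hf
    have hall : ∀ y : P1 F K, M • y = y ↔ y = z := by
      have hw' : ∀ y : P1 F K, M • y = y ↔ y = w := by
        intro y
        have := congrArg (fun s => y ∈ s) hw
        simpa using this
      have := (hw' z).1 hz
      rw [this]; exact hw'
    refine congrArg (· % p) (?_ : _ = _)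
    have : ((Ob H (inf : P1 F K)).filter fun y => M • y = y) =
        if z ∈ Ob H (inf : P1 F K) then {z} else ∅ := by
      ext y
      simp only [Finset.mem_filter, hall]
      split_ifs with hzO
      · rw [Finset.mem_singleton]
        exact ⟨fun h => h.2, fun h => ⟨h ▸ hzO, h⟩⟩
      · constructor
        · rintro ⟨h, rfl⟩; exact absurd h hzO
        · intro h; exact absurd h (Finset.notMem_empty _)
    rw [this]
    split_ifs <;> simp
  have hT1 : T b ≠ 1 := by
    intro h; apply hb; apply T_inj; rw [h, T_zero]
  have hT2 : T b ≠ -1 := by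
    intro h
    have := congrArg (fun M : SL(2, F) => M 0 0) h
    have h' : (1 : F) = -1 := by simpa [T, mkSL00] using this
    apply h2; linear_combination h'
  have htr : (T b) 0 0 + (T b) 1 1 = 2 := by
    show (1 : F) + 1 = 2
    norm_num
  have hparT : par (T b) := by rw [par, htr]; norm_num
  have m1 := main (T b) (tr_pow_p (p := p) htr) (hst _ hTb) hT1 hT2 hparT inf (T_inf b)
  rw [if_pos (mem_Ob_self H _)] at m1
  obtain ⟨M, hM⟩ := Finset.card_ne_zero.1 hx
  simp only [Finset.mem_filter, Finset.mem_univ, true_and] at hM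
  obtain ⟨⟨⟨hMH, hM1, hM2⟩, hMx⟩, hMp⟩ := hM
  have m2 : (Ob H (inf : P1 F K)).card ≡ 0 [MOD p] := by
    rcases par_cases hMp with h | h
    · have := main M (tr_pow_p (p := p) h) (hst _ hMH) hM1 hM2 hMp x hMx
      rwa [if_neg hxO] at this
    · have := main (-M) (tr_pow_p (p := p) h)
        (by intro y hy; rw [neg_smul']; exact hst M hMH y hy)
        (by intro h; apply hM2; rw [← h, neg_neg]) (by intro h; exact hM1 (neg_injective h))
        (by rw [par, h]; norm_num) x (by rw [neg_smul', hMx])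
      rwa [if_neg hxO] at this
  have h4 : 0 ≡ 1 [MOD p] := m2.symm.trans m1
  have := (Nat.modEq_iff_dvd' (by norm_num)).1 h4
  exact hp.1.one_lt.ne' (Nat.dvd_one.1 (by simpa using this))

theorem V1 {p : ℕ} [hp : Fact p.Prime] [CharP F p] (h2 : (2 : F) ≠ 0)
    (hodd : Fintype.card F % 2 = 1)
    (hK : ∀ a : F, IsSquare (algebraMap F K a)) (H : Subgroup SL(2, F)) (hH : -1 ∈ H)
    (hHt : H ≠ ⊤)
    {b : F} (hb : b ≠ 0) (hTb : T b ∈ H) {M : SL(2, F)} (hM : M ∈ H) (hc : M 1 0 ≠ 0) :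
    ∃ h k n : ℕ, n = (Ob H (inf : P1 F K)).card ∧ Nat.card H = n * (2 * h * k) ∧
      ((n = h + 1 ∧ (2 * k = h - 1 ∨ k = h - 1)) ∨ (h = 3 ∧ k = 2 ∧ n = 10)) ∧
      h ∣ Fintype.card F ∧ 3 ≤ h ∧ h * h ≤ Fintype.card F := by
  have hhq : Nat.card (U H) ∣ Fintype.card F := by
    rw [← Nat.card_eq_fintype_card]
    exact AddSubgroup.card_addSubgroup_dvd_card _
  have hh3 : 3 ≤ Nat.card (U H) := by
    have h1 : 1 < Nat.card (U H) := by
      rw [Finite.one_lt_card_iff_nontrivial]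
      exact ⟨⟨b, hTb⟩, 0, fun h => hb (congrArg Subtype.val h)⟩
    have h2 : Nat.card (U H) ≠ 2 := by
      intro h
      rw [h] at hhq
      omega
    omega
  have hhlt : Nat.card (U H) < Fintype.card F := by
    refine lt_of_le_of_ne (Nat.le_of_dvd Fintype.card_pos hhq) ?_
    intro h
    apply hHt
    apply U_top _ hM hc
    intro c
    have : U H = ⊤ := by
      apply AddSubgroup.eq_top_of_card_eq
      rw [h, Nat.card_eq_fintype_card]
    rw [← mem_U, this]; trivial
  have hk1 : 1 ≤ Nat.card (D2 H) := Nat.card_pos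
  have hkh := card_D2_dvd H
  have hkq := D2_dvd_q h2 H hH
  have hS := S_inf_eq (K := K) h2 H hH
  have hPP := PP_inf_eq (K := K) h2 H hH
  have hn := Ob_ge (K := K) H hM hc
  have hN := card_Ob H (inf : P1 F K)
  have hW := W_eq h2 H hH (inf : P1 F K)
  have hsum := sum_W h2 hK H hH
  obtain ⟨st1, p1⟩ := peel H (stable_univ H) (Finset.mem_univ (inf : P1 F K))
  rw [p1] at hsum
  have facts : ∀ x : P1 F K, x ∉ Ob H (inf : P1 F K) → W H x ≠ 0 → W H x + 2 = S H x ∧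
      2 ∣ S H x ∧ 4 * (Ob H x).card ≤ Nat.card H ∧
      (Ob H x).card * W H x + 2 * (Ob H x).card = Nat.card H := by
    intro x hx hx0
    have h0 : PP H x = 0 := by
      by_contra h0
      exact hx (par_in_Ob (p := p) h2 hK H hb hTb h0)
    have h1 := W_eq h2 H hH x
    rw [h0, add_zero] at h1
    have h3 := two_dvd_S h2 H hH x
    have h4 := card_Ob H x
    have h5 : 4 ≤ S H x := by omega
    exact ⟨h1, h3, by rw [← h4]; nlinarith, by rw [← h4, ← h1]; ring⟩
  rw [hS, hPP] at hW
  rw [hS] at hN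
  generalize (Ob H (inf : P1 F K)).card = n at *
  generalize Nat.card (U H) = h at *
  generalize Nat.card (D2 H) = k at *
  obtain ⟨j, rfl⟩ : ∃ j, h = j + 2 := ⟨h - 2, by omega⟩
  have ej : j + 2 - 1 = j + 1 := by omega
  have hW' : W H (inf : P1 F K) = 2 * (j + 2) * k + 2 * j := by omega
  rw [hW', ← hN] at hsum
  have hsum' : ∑ y ∈ Finset.univ \ Ob H (inf : P1 F K), W H y + 4 + 2 * (n * j) = Nat.card H := by
    rw [← hN]; linarith
  have hbig : 4 + 2 * (n * j) < Nat.card H := by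
    rw [← hN]
    have : n * (2 * (j + 2) * 1) ≤ n * (2 * (j + 2) * k) :=
      Nat.mul_le_mul_left _ (Nat.mul_le_mul_left _ hk1)
    nlinarith
  obtain ⟨x1, hx1, hx1'⟩ := exists_pos_of_sum (H := H) (Y := Finset.univ \ Ob H (inf : P1 F K))
    (by omega)
  have hr1 : x1 ∉ Ob H (inf : P1 F K) := (Finset.mem_sdiff.1 hx1).2
  obtain ⟨f1, f1', f1'', f1d⟩ := facts x1 hr1 hx1'
  obtain ⟨st2, p2⟩ := peel H st1 hx1
  rw [p2] at hsum'
  have hz : ∑ y ∈ ((Finset.univ \ Ob H (inf : P1 F K)) \ Ob H x1), W H y = 0 := by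
    by_contra hne
    obtain ⟨x2, hx2, hx2'⟩ := exists_pos_of_sum hne
    have hr2 : x2 ∉ Ob H (inf : P1 F K) := (Finset.mem_sdiff.1 (Finset.mem_sdiff.1 hx2).1).2
    obtain ⟨f2, f2', f2'', f2d⟩ := facts x2 hr2 hx2'
    obtain ⟨st3, p3⟩ := peel H st2 hx2
    rw [p3] at hsum'
    omega
  rw [hz] at hsum'
  have hm : (Ob H x1).card = 2 + n * j := by omega
  obtain ⟨c, hc2⟩ := f1'
  have hNc := card_Ob H x1
  rw [hm, hc2, ← hN] at hNc
  have e : (j + 2) * k * n = c * (2 + n * (j + 2 - 2)) := by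
    rw [Nat.add_sub_cancel]
    have : 2 * ((j + 2) * k * n) = 2 * (c * (2 + n * j)) := by linarith
    omega
  have hA := arith2 hh3 hk1 hkh hn (by omega) e
  refine ⟨j + 2, k, n, rfl, hN.symm, hA, hhq, hh3, ?_⟩
  have hdiv : j + 1 ∣ Fintype.card F - 1 := by
    refine dvd_trans ?_ hkq
    rw [ej] at hA
    rcases hA with ⟨_, h | h⟩ | ⟨h3, hk, _⟩
    · rw [h]
    · rw [h]; exact Dvd.intro_left _ rfl
    · have : j = 1 := by omega
      subst this; subst hk; norm_num
  obtain ⟨m, hm'⟩ := hhq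
  rw [hm'] at hdiv hhlt ⊢
  have hm1 : 1 < m := by
    by_contra hle
    have : m ≤ 1 := by omega
    have := Nat.mul_le_mul_left (j + 2) this
    omega
  have e3 : (j + 2) * m - 1 = (j + 1) * m + (m - 1) := by
    have : (j + 2) * m = (j + 1) * m + m := by ring
    omega
  rw [e3] at hdiv
  have h5 := (Nat.dvd_add_right (Dvd.intro m rfl)).1 hdiv
  have h6 := Nat.le_of_dvd (by omega) h5
  exact Nat.mul_le_mul_left _ (by omega)

end vone
end PSLFact

namespace PSLFact
set_option linter.unusedSectionVars false
section final
variable {F K : Type*} [Field F] [Fintype F] [Field K] [Finite K] [Algebra F K]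

open Classical

theorem card_conj (H : Subgroup SL(2, F)) (g : SL(2, F)) :
    Nat.card (H.comap (MulAut.conj g).toMonoidHom) = Nat.card H := by
  refine Nat.card_congr ⟨fun M => ⟨g * M.1 * g⁻¹, M.2⟩, fun M => ⟨g⁻¹ * M.1 * g, ?_⟩, ?_, ?_⟩
  · show g * (g⁻¹ * M.1 * g) * g⁻¹ ∈ H
    have : g * (g⁻¹ * M.1 * g) * g⁻¹ = M.1 := by group
    rw [this]; exact M.2
  · intro M; apply Subtype.ext
    show g⁻¹ * (g * M.1 * g⁻¹) * g = M.1
    group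
  · intro M; apply Subtype.ext
    show g * (g⁻¹ * M.1 * g) * g⁻¹ = M.1
    group

theorem mem_conj {H : Subgroup SL(2, F)} {g M : SL(2, F)} :
    M ∈ H.comap (MulAut.conj g).toMonoidHom ↔ g * M * g⁻¹ ∈ H := Iff.rfl

theorem mem_conj' {H : Subgroup SL(2, F)} {g M : SL(2, F)} (hM : M ∈ H) :
    g⁻¹ * M * g ∈ H.comap (MulAut.conj g).toMonoidHom := by
  rw [mem_conj]
  have : g * (g⁻¹ * M * g) * g⁻¹ = M := by group
  rwa [this]

theorem V2 {p : ℕ} [hp : Fact p.Prime] [CharP F p] (h2 : (2 : F) ≠ 0)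
    (hodd : Fintype.card F % 2 = 1)
    (hK : ∀ a : F, IsSquare (algebraMap F K a)) (H : Subgroup SL(2, F)) (hH : -1 ∈ H)
    (hHt : H ≠ ⊤) (hpH : p ∣ Nat.card H)
    (hfix : ∀ x : P1 F K, rat x → ∃ M ∈ H, M • x ≠ x) :
    ∃ h k n : ℕ, ((∀ x : P1 F K, rat x → ∃ M ∈ H, M • inf = x) → n = Fintype.card F + 1) ∧
      Nat.card H = n * (2 * h * k) ∧
      ((n = h + 1 ∧ (2 * k = h - 1 ∨ k = h - 1)) ∨ (h = 3 ∧ k = 2 ∧ n = 10)) ∧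
      h ∣ Fintype.card F ∧ 3 ≤ h ∧ h * h ≤ Fintype.card F := by
  have hp2 : p ≠ 2 := by
    rintro rfl
    apply h2
    exact_mod_cast CharP.cast_eq_zero F 2
  obtain ⟨M, hMo⟩ := exists_prime_orderOf_dvd_card' p hpH
  have hMp : M.1 ^ p = 1 := by
    have := pow_orderOf_eq_one M
    rw [hMo] at this
    exact congrArg Subtype.val this
  have hM1 : M.1 ≠ 1 := by
    intro h
    have : M = 1 := Subtype.ext h
    rw [this, orderOf_one] at hMo
    exact hp.1.one_lt.ne hMo
  have hM2 : M.1 ≠ -1 := by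
    intro h
    rw [h, (hp.1.odd_of_ne_two hp2).neg_one_pow] at hMp
    exact one_ne_neg h2 hMp.symm
  obtain ⟨x, hx, hMx⟩ := order_p_rat (K := K) hMp
  have hpar := order_p_par h2 hK hMp hM1 hM2
  obtain ⟨g, rfl⟩ := rat_trans hx
  set H' := H.comap (MulAut.conj g).toMonoidHom with hH'
  have hneg : -1 ∈ H' := by
    rw [hH', mem_conj]; simpa using hH
  have htop : H' ≠ ⊤ := by
    intro h
    apply hHt
    rw [eq_top_iff]
    rintro m -
    have : g⁻¹ * m * g ∈ H' := by rw [h]; trivial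
    rw [hH', mem_conj] at this
    have e : g * (g⁻¹ * m * g) * g⁻¹ = m := by group
    rwa [e] at this
  have hm := mem_conj' (g := g) M.2
  have hN0 : (g⁻¹ * M.1 * g) 1 0 = 0 := by
    rw [← smul_inf_iff (K := K), mul_smul, mul_smul, hMx, inv_smul_smul]
  have hNpar : par (g⁻¹ * M.1 * g) := by
    have := (par_conj g⁻¹ M.1).2 hpar
    rwa [inv_inv] at this
  have hN1 : g⁻¹ * M.1 * g ≠ 1 := by
    intro h
    apply hM1
    have : M.1 = g * (g⁻¹ * M.1 * g) * g⁻¹ := by group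
    rw [this, h]; simp
  have hN2 : g⁻¹ * M.1 * g ≠ -1 := by
    intro h
    apply hM2
    have : M.1 = g * (g⁻¹ * M.1 * g) * g⁻¹ := by group
    rw [this, h]; simp
  obtain ⟨b, hb, hTb⟩ : ∃ b : F, b ≠ 0 ∧ T b ∈ H' := by
    rcases par_cases hNpar with h | h
    · have e := tr2_T hN0 h
      refine ⟨_, ?_, by rw [← e]; exact hm⟩
      intro h0; rw [h0, T_zero] at e; exact hN1 e
    · have e := tr2_T (M := -(g⁻¹ * M.1 * g)) (by rw [neg10, hN0, neg_zero]) h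
      refine ⟨_, ?_, by rw [← e]; exact neg_mem' hneg hm⟩
      intro h0; rw [h0, T_zero] at e; exact hN2 (by rw [← e, neg_neg])
  obtain ⟨R, hR, hRx⟩ := hfix _ hx
  have hR' := mem_conj' (g := g) hR
  have hRc : (g⁻¹ * R * g) 1 0 ≠ 0 := by
    intro h
    rw [← smul_inf_iff (K := K), mul_smul, mul_smul, inv_smul_eq_iff] at h
    exact hRx h
  obtain ⟨h, k, n, hn, hN, rest⟩ := V1 (p := p) (K := K) h2 hodd hK H' hneg htop hb hTb hR' hRc
  refine ⟨h, k, n, ?_, by rw [← hN, hH', card_conj], rest⟩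
  intro htr
  rw [hn, ← card_rat (F := F) (K := K)]
  congr 1
  ext y
  simp only [Ob, Finset.mem_filter, Finset.mem_univ, true_and]
  constructor
  · rintro ⟨m, _, rfl⟩; exact rat_smul m (Or.inl rfl)
  · intro hy
    obtain ⟨m1, hm1, e1⟩ := htr (g • y) (rat_smul g hy)
    obtain ⟨m2, hm2, e2⟩ := htr (g • inf) (rat_smul g (Or.inl rfl))
    refine ⟨g⁻¹ * (m1 * m2⁻¹) * g, mem_conj' (H.mul_mem hm1 (H.inv_mem hm2)), ?_⟩
    rw [mul_smul, mul_smul, mul_smul, ← e2, inv_smul_smul, e1, inv_smul_smul]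

theorem trans_nofix {H : Subgroup SL(2, F)}
    (htr : ∀ x : P1 F K, rat x → ∃ M ∈ H, M • inf = x) (x : P1 F K) (hx : rat x) :
    ∃ M ∈ H, M • x ≠ x := by
  by_contra hno
  push Not at hno
  obtain ⟨m, hm, e⟩ := htr x hx
  have h1 := hno m⁻¹ (H.inv_mem hm)
  rw [← e, inv_smul_smul] at h1
  obtain ⟨m', hm', e'⟩ := htr (fin (algebraMap F K 0)) (Or.inr ⟨0, rfl⟩)
  have h2 := hno m' hm'
  rw [← e, ← h1, e'] at h2
  exact fin_ne_inf h2

theorem V3 {p : ℕ} [hp : Fact p.Prime] [CharP F p] (h2 : (2 : F) ≠ 0)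
    (hodd : Fintype.card F % 2 = 1) (h9 : Fintype.card F ≠ 9)
    (hK : ∀ a : F, IsSquare (algebraMap F K a)) (H : Subgroup SL(2, F)) (hH : -1 ∈ H)
    (hHt : H ≠ ⊤) (hpH : p ∣ Nat.card H)
    (htr : ∀ x : P1 F K, rat x → ∃ M ∈ H, M • inf = x) : False := by
  obtain ⟨h, k, n, hn, _, hA, _, h3, hle⟩ := V2 (p := p) h2 hodd hK H hH hHt hpH (trans_nofix htr)
  have hn := hn htr
  rcases hA with ⟨h4, _⟩ | ⟨_, _, h4⟩
  · have : h = Fintype.card F := by omega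
    rw [← this] at hle
    nlinarith
  · omega

theorem caseI {p : ℕ} [hp : Fact p.Prime] [CharP F p] (hmod : Fintype.card F % 4 = 1)
    (h5 : Fintype.card F ≠ 5) (h9 : Fintype.card F ≠ 9)
    (h29 : Fintype.card F ≠ 29) (h2 : (2 : F) ≠ 0)
    (hK : ∀ a : F, IsSquare (algebraMap F K a)) (A B : Subgroup SL(2, F)) (hB : -1 ∈ B)
    (hBt : B ≠ ⊤) (hBA : ∀ g : SL(2, F), ∃ b ∈ B, ∃ a ∈ A, g = b * a)
    {x : P1 F K} (hx : rat x) (hA : ∀ M ∈ A, M • x = x) : False := by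
  have h1 : ∀ y : P1 F K, rat y → ∃ M ∈ B, M • x = y := by
    intro y hy
    obtain ⟨g1, e1⟩ := rat_trans hx
    obtain ⟨g2, e2⟩ := rat_trans hy
    obtain ⟨b, hb, a, ha, e⟩ := hBA (g2 * g1⁻¹)
    refine ⟨b, hb, ?_⟩
    have : (g2 * g1⁻¹) • x = y := by rw [← e1, mul_smul, inv_smul_smul, e2]
    rw [← this, e, mul_smul, hA a ha]
  have htr : ∀ y : P1 F K, rat y → ∃ M ∈ B, M • inf = y := by
    intro y hy
    obtain ⟨b1, hb1, e1⟩ := h1 inf (Or.inl rfl)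
    obtain ⟨b2, hb2, e2⟩ := h1 y hy
    refine ⟨b2 * b1⁻¹, B.mul_mem hb2 (B.inv_mem hb1), ?_⟩
    rw [← e1, mul_smul, inv_smul_smul, e2]
  by_cases hpB : p ∣ Nat.card B
  · exact V3 (p := p) h2 (by omega) h9 hK B hB hBt hpB htr
  · exact case_prime_to_p hmod h5 h29 h2 hK B hB
      (fun M hM hM1 hM2 hpar => hpB (par_dvd (p := p) hB hM hM1 hM2 hpar)) htr

theorem card_SL : Nat.card SL(2, F) =
    (Fintype.card F + 1) * (Fintype.card F * (Fintype.card F - 1)) := by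
  have h := card_Ob (⊤ : Subgroup SL(2, F)) (inf : P1 F F)
  rw [Subgroup.card_top] at h
  rw [← h]
  congr 1
  · rw [← card_rat (F := F) (K := F)]
    congr 1
    ext y
    simp only [Ob, Finset.mem_filter, Finset.mem_univ, true_and]
    constructor
    · rintro ⟨m, _, rfl⟩; exact rat_smul m (Or.inl rfl)
    · intro hy
      obtain ⟨m, e⟩ := rat_trans hy
      exact ⟨m, trivial, e⟩
  · rw [S_inf, card_hom (chi ⊤), card_ker_chi]
    congr 1
    · have : U (⊤ : Subgroup SL(2, F)) = ⊤ := by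
        rw [eq_top_iff]; intro b _; exact mem_U.2 trivial
      rw [this, AddSubgroup.card_top, Nat.card_eq_fintype_card]
    · have : (chi (⊤ : Subgroup SL(2, F))).range = ⊤ := by
        rw [eq_top_iff]
        rintro u -
        refine ⟨⟨mkSL u 0 0 (u⁻¹ : Fˣ) (by simp), trivial, rfl⟩, ?_⟩
        ext; rfl
      rw [this, Subgroup.card_top, Nat.card_eq_fintype_card, Fintype.card_units]

theorem card_dvd_of_fact {G : Type*} [Group G] [Finite G] (A B : Subgroup G)
    (h : ∀ g : G, ∃ a ∈ A, ∃ b ∈ B, g = a * b) : Nat.card G ∣ Nat.card A * Nat.card B := by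
  have hpre : MulAction.IsPretransitive A (G ⧸ B) := by
    rw [MulAction.isPretransitive_iff_base ((1 : G) : G ⧸ B)]
    intro y
    induction y using QuotientGroup.induction_on with
    | H g =>
      obtain ⟨a, ha, b, hb, rfl⟩ := h g
      refine ⟨⟨a, ha⟩, ?_⟩
      show ((a * 1 : G) : G ⧸ B) = _
      rw [QuotientGroup.eq]
      simpa using hb
  have h1 := MulAction.index_stabilizer_of_transitive A ((1 : G) : G ⧸ B)
  have h3 : B.index ∣ Nat.card A := by
    have h4 := Subgroup.index_dvd_card (MulAction.stabilizer A ((1 : G) : G ⧸ B))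
    rw [h1] at h4
    exact h4
  rw [← Subgroup.card_mul_index B, mul_comm]
  exact Nat.mul_dvd_mul_right h3 _

theorem V2' {p : ℕ} [hp : Fact p.Prime] [CharP F p] (h2 : (2 : F) ≠ 0)
    (hodd : Fintype.card F % 2 = 1)
    (hK : ∀ a : F, IsSquare (algebraMap F K a)) (H : Subgroup SL(2, F)) (hH : -1 ∈ H)
    (hHt : H ≠ ⊤) (hpH : p ∣ Nat.card H)
    (hfix : ∀ x : P1 F K, rat x → ∃ M ∈ H, M • x ≠ x) :
    ∃ h c : ℕ, Nat.card H ∣ h * c ∧ Nat.Coprime (Fintype.card F) c ∧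
      (c = 2 * (h * h - 1) ∨ h = 3) ∧ 3 ≤ h ∧ h * h ≤ Fintype.card F := by
  obtain ⟨h, k, n, -, hN, hA, hd, h3, hle⟩ := V2 (p := p) h2 hodd hK H hH hHt hpH hfix
  obtain ⟨r, hp', hr⟩ := FiniteField.card F p
  have hp2 : p ≠ 2 := by
    rintro rfl
    apply h2
    exact_mod_cast CharP.cast_eq_zero F 2
  have hcop : ∀ c : ℕ, ¬ p ∣ c → Nat.Coprime (Fintype.card F) c := by
    intro c hc
    rw [hr]
    exact Nat.Coprime.pow_left _ ((Nat.Prime.coprime_iff_not_dvd hp').2 hc)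
  have hph : p ∣ h := by
    rw [hr] at hd
    obtain ⟨i, _, hi⟩ := (Nat.dvd_prime_pow hp').1 hd
    rw [hi]
    apply dvd_pow_self
    rintro rfl
    rw [hi] at h3; simp at h3
  have hpc : ¬ p ∣ 2 * (h * h - 1) := by
    intro hdv
    rcases hp'.dvd_mul.1 hdv with h4 | h4
    · exact hp2 ((Nat.prime_dvd_prime_iff_eq hp' Nat.prime_two).1 h4)
    · have h5 : p ∣ h * h := dvd_mul_of_dvd_left hph h
      have h6 := (Nat.dvd_sub h5 h4)
      have h7 : h * h - (h * h - 1) = 1 := by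
        have : 1 ≤ h * h := by nlinarith
        omega
      rw [h7] at h6
      exact hp'.one_lt.ne' (Nat.dvd_one.1 h6)
  rcases hA with ⟨hn, hk⟩ | ⟨rfl, rfl, rfl⟩
  · refine ⟨h, 2 * (h * h - 1), ?_, hcop _ hpc, Or.inl rfl, h3, hle⟩
    obtain ⟨j, rfl⟩ : ∃ j, h = j + 1 := ⟨h - 1, by omega⟩
    have e : (j + 1) * (j + 1) - 1 = (j + 2) * j := by
      have : (j + 1) * (j + 1) = (j + 2) * j + 1 := by ring
      omega
    rw [hN, hn, e]
    rw [Nat.add_sub_cancel] at hk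
    rcases hk with hk | hk
    · rw [← hk]; exact ⟨2, by ring⟩
    · rw [hk]; exact ⟨1, by ring⟩
  · have hp3 : p = 3 := (Nat.prime_dvd_prime_iff_eq hp' Nat.prime_three).1 hph
    exact ⟨3, 40, by rw [hN], hcop _ (by rw [hp3]; norm_num), Or.inr rfl, le_refl _, hle⟩

theorem arith3 {q h c h' c' : ℕ} (h9 : q ≠ 9)
    (hd : (q + 1) * (q * (q - 1)) ∣ (h * c) * (h' * c'))
    (hc : Nat.Coprime q c) (hc' : Nat.Coprime q c')
    (h1 : c = 2 * (h * h - 1) ∨ h = 3) (h1' : c' = 2 * (h' * h' - 1) ∨ h' = 3)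
    (h3 : 3 ≤ h) (h3' : 3 ≤ h') (hle : h * h ≤ q) (hle' : h' * h' ≤ q) : False := by
  have hq : q ∣ h * h' := by
    have : q ∣ (h * h') * (c * c') := by
      refine dvd_trans ⟨(q + 1) * (q - 1), by ring⟩ (hd.trans ⟨1, by ring⟩)
    exact (Nat.Coprime.mul_right hc hc').dvd_of_dvd_mul_right this
  have hqle := Nat.le_of_dvd (by positivity) hq
  have heq : h = h' := by
    rcases lt_trichotomy h h' with hl | hl | hl
    · nlinarith
    · exact hl
    · nlinarith
  subst heq
  have hqe : q = h * h := by omega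
  have hne : h ≠ 3 := by rintro rfl; omega
  have e1 := h1.resolve_right hne
  have e2 := h1'.resolve_right hne
  obtain ⟨m, hm⟩ : ∃ m, h * h = m + 1 := by
    have : 1 ≤ h * h := by nlinarith
    exact ⟨h * h - 1, by omega⟩
  have hm8 : 8 ≤ m := by nlinarith
  rw [e1, e2, hqe, hm, Nat.add_sub_cancel] at hd
  have e3 : h * (2 * m) * (h * (2 * m)) = (m + 1) * m * (4 * m) := by rw [← hm]; ring
  rw [e3] at hd
  have hd2 : (m + 1) * m * (m + 1 + 1) ∣ (m + 1) * m * (4 * m) :=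
    dvd_trans ⟨1, by ring⟩ hd
  have hd3 := Nat.dvd_of_mul_dvd_mul_left (by positivity) hd2
  have hd4 : m + 2 ∣ 8 := by
    have : 4 * (m + 2) = 4 * m + 8 := by ring
    exact (Nat.dvd_add_right hd3).1 (this ▸ Dvd.intro_left 4 rfl)
  have := Nat.le_of_dvd (by norm_num) hd4
  omega

theorem arith4 {q a h c : ℕ} (hd : (q + 1) * (q * (q - 1)) ∣ a * (h * c))
    (hc : Nat.Coprime q c) (ha : Nat.Coprime q a)
    (h3 : 3 ≤ h) (hle : h * h ≤ q) : False := by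
  have hq : q ∣ h := by
    have : q ∣ h * (a * c) := by
      refine dvd_trans ⟨(q + 1) * (q - 1), by ring⟩ (hd.trans ⟨1, by ring⟩)
    exact (Nat.Coprime.mul_right ha hc).dvd_of_dvd_mul_right this
  have hqle := Nat.le_of_dvd (by positivity) hq
  nlinarith

theorem caseIIa {p : ℕ} [hp : Fact p.Prime] [CharP F p] (h2 : (2 : F) ≠ 0)
    (hodd : Fintype.card F % 2 = 1)
    (hK : ∀ a : F, IsSquare (algebraMap F K a)) (A B : Subgroup SL(2, F)) (hB : -1 ∈ B)
    (hBt : B ≠ ⊤) (hdvd : Nat.card SL(2, F) ∣ Nat.card A * Nat.card B)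
    (hpA : ¬ p ∣ Nat.card A)
    (hfix : ∀ x : P1 F K, rat x → ∃ M ∈ B, M • x ≠ x) : False := by
  obtain ⟨r, hp', hr⟩ := FiniteField.card F p
  have hcop : Nat.Coprime (Fintype.card F) (Nat.card A) := by
    rw [hr]
    exact Nat.Coprime.pow_left _ ((Nat.Prime.coprime_iff_not_dvd hp').2 hpA)
  rw [card_SL] at hdvd
  have hqB : Fintype.card F ∣ Nat.card B := by
    refine hcop.dvd_of_dvd_mul_left (dvd_trans ?_ hdvd)
    exact ⟨(Fintype.card F + 1) * (Fintype.card F - 1), by ring⟩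
  obtain ⟨h, c, h1, h3, _, h5, h6⟩ := V2' (p := p) h2 hodd hK B hB hBt
    ((p_dvd_F (F := F)).trans hqB) hfix
  exact arith4 (hdvd.trans (Nat.mul_dvd_mul_left _ h1)) h3 hcop h5 h6

theorem main_SL {p : ℕ} [hp : Fact p.Prime] [CharP F p] (hmod : Fintype.card F % 4 = 1)
    (h5 : Fintype.card F ≠ 5) (h9 : Fintype.card F ≠ 9)
    (h29 : Fintype.card F ≠ 29) (h2 : (2 : F) ≠ 0)
    (hK : ∀ a : F, IsSquare (algebraMap F K a)) (A B : Subgroup SL(2, F)) (hA : -1 ∈ A)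
    (hB : -1 ∈ B) (hAt : A ≠ ⊤)
    (hBt : B ≠ ⊤) (hAB : ∀ g : SL(2, F), ∃ a ∈ A, ∃ b ∈ B, g = a * b) : False := by
  have hBA : ∀ g : SL(2, F), ∃ b ∈ B, ∃ a ∈ A, g = b * a := by
    intro g
    obtain ⟨a, ha, b, hb, e⟩ := hAB g⁻¹
    exact ⟨b⁻¹, B.inv_mem hb, a⁻¹, A.inv_mem ha, by rw [← _root_.mul_inv_rev, ← e, inv_inv]⟩
  have hodd : Fintype.card F % 2 = 1 := by omega
  by_cases fA : ∃ x : P1 F K, rat x ∧ ∀ M ∈ A, M • x = x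
  · obtain ⟨x, hx, h⟩ := fA
    exact caseI (p := p) hmod h5 h9 h29 h2 hK A B hB hBt hBA hx h
  by_cases fB : ∃ x : P1 F K, rat x ∧ ∀ M ∈ B, M • x = x
  · obtain ⟨x, hx, h⟩ := fB
    exact caseI (p := p) hmod h5 h9 h29 h2 hK B A hA hAt hAB hx h
  push Not at fA fB
  have d1 := card_dvd_of_fact A B hAB
  have d2 := card_dvd_of_fact B A hBA
  by_cases pA : p ∣ Nat.card A
  · by_cases pB : p ∣ Nat.card B
    · obtain ⟨h, c, a1, a2, a3, a4, a5⟩ := V2' (p := p) h2 hodd hK A hA hAt pA fA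
      obtain ⟨h', c', b1, b2, b3, b4, b5⟩ := V2' (p := p) h2 hodd hK B hB hBt pB fB
      rw [card_SL] at d1
      exact arith3 h9 (d1.trans (Nat.mul_dvd_mul a1 b1)) a2 b2 a3 b3 a4 b4 a5 b5
    · exact caseIIa (p := p) h2 hodd hK B A hA hAt d2 pB fA
  · exact caseIIa (p := p) h2 hodd hK A B hB hBt d1 pA fB

end final
end PSLFact

/-- for a prime power `q ≥ 4` with `q ≡ 1 (mod 4)` and `q ∉ {5, 9, 29}`, the
group `PSL(2,q)` has no factorization `PSL(2,q) = AB` with both `A` and `B` proper subgroups. -/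
theorem stmt_10 (F : Type*) [Field F] [Fintype F] (q : ℕ) (hq : Fintype.card F = q)
    (hq4 : 4 ≤ q) (hmod : q % 4 = 1) (hexc : q ≠ 5 ∧ q ≠ 9 ∧ q ≠ 29) :
    ¬ ∃ A B : Subgroup (Matrix.ProjectiveSpecialLinearGroup (Fin 2) F),
        A ≠ ⊤ ∧ B ≠ ⊤ ∧ ∀ g, ∃ a ∈ A, ∃ b ∈ B, g = a * b := by
  rintro ⟨A, B, hA, hB, hAB⟩
  subst hq
  obtain ⟨p, hp, n, hp', hcard⟩ := FiniteField.card' F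
  have : Fact p.Prime := ⟨hp'⟩
  obtain ⟨K, _, _, _, hK⟩ := PSLFact.exists_ext F
  have h2 : (2 : F) ≠ 0 := by
    intro h
    have h1 : p ∣ 2 := (CharP.cast_eq_zero_iff F p 2).1 (by exact_mod_cast h)
    have h3 : p = 2 := (Nat.prime_dvd_prime_iff_eq hp' Nat.prime_two).1 h1
    have h4 : p ∣ Fintype.card F := PSLFact.p_dvd_F
    rw [h3] at h4
    omega
  set φ := QuotientGroup.mk' (Subgroup.center SL(2, F)) with hφ
  have hs : Function.Surjective φ := QuotientGroup.mk'_surjective _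
  have hneg : ∀ C : Subgroup (Matrix.ProjectiveSpecialLinearGroup (Fin 2) F),
      -1 ∈ C.comap φ := by
    intro C
    rw [Subgroup.mem_comap]
    have : φ (-1) = 1 := by
      rw [hφ, QuotientGroup.mk'_apply, QuotientGroup.eq_one_iff, Subgroup.mem_center_iff]
      intro g; simp
    rw [this]; exact C.one_mem
  have htop : ∀ C : Subgroup (Matrix.ProjectiveSpecialLinearGroup (Fin 2) F),
      C ≠ ⊤ → C.comap φ ≠ ⊤ := by
    intro C hC h
    apply hC
    rw [eq_top_iff]
    rintro g -
    obtain ⟨m, rfl⟩ := hs g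
    have : m ∈ C.comap φ := by rw [h]; trivial
    exact this
  refine PSLFact.main_SL (p := p) (K := K) hmod hexc.1 hexc.2.1 hexc.2.2 h2 hK
    (A.comap φ) (B.comap φ) (hneg A) (hneg B) (htop A hA) (htop B hB) ?_
  intro g
  obtain ⟨a, ha, b, hb, e⟩ := hAB (φ g)
  obtain ⟨m, rfl⟩ := hs a
  refine ⟨m, ha, m⁻¹ * g, ?_, by group⟩
  have : φ (m⁻¹ * g) = b := by
    rw [map_mul, map_inv, e, inv_mul_cancel_left]
  rw [Subgroup.mem_comap, this]
  exact hb
end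

section
/- Let q be a prime power with q ≢ 1 (mod 4). Then PSL(2,q) = AB where A is a maximal parabolic subgroup (a point stabilizer in the action on the projective line, of order q(q−1)/gcd(2,q−1)) and B is dihedral of order 2(q+1) if q is even, and of order q+1 if q is odd; moreover |A ∩ B| = 2 if q is even and |A ∩ B| = 1 if q is odd. -/
open Matrix

lemma dih_aux {G : Type*} [Group G] (m : ℕ) (T : Subgroup G) (hcyc : IsCyclic T)
    (hT : Nat.card T = m) (s : G) (hs : s * s = 1) (hsT : s ∉ T)
    (hc : ∀ t ∈ T, s * t * s = t⁻¹) :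
    ∃ B : Subgroup G, Nonempty (B ≃* DihedralGroup m) ∧ ∀ g, g ∈ B ↔ g ∈ T ∨ s * g ∈ T := by
  subst hT
  let e := zmodCyclicMulEquiv hcyc
  let k : ZMod (Nat.card T) → G := fun i => (e (Multiplicative.ofAdd i) : G)
  have kT : ∀ i, k i ∈ T := fun i => (e (Multiplicative.ofAdd i)).2
  have kadd : ∀ i j, k (i + j) = k i * k j := fun i j => by
    simp only [k, ofAdd_add, map_mul, Subgroup.coe_mul]
  have kneg : ∀ i, k (-i) = (k i)⁻¹ := fun i => by
    simp only [k, ofAdd_neg, map_inv, Subgroup.coe_inv]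
  have kz : k 0 = 1 := by simp [k]
  have ksub : ∀ i j, k (i - j) = k i * (k j)⁻¹ := fun i j => by
    rw [sub_eq_add_neg, kadd, kneg]
  have kinj : Function.Injective k := fun i j h => by
    have := e.injective (Subtype.ext h)
    exact this
  have ksurj : ∀ t ∈ T, ∃ i, k i = t := fun t ht => by
    obtain ⟨i, hi⟩ := e.surjective ⟨t, ht⟩
    exact ⟨Multiplicative.toAdd i, by simp [k, hi]⟩
  have kcomm : ∀ i j, k i * k j = k j * k i := fun i j => by rw [← kadd, ← kadd, add_comm]
  have ks : ∀ i, k i * s = s * (k i)⁻¹ := fun i => by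
    rw [← hc _ (kT i), ← mul_assoc, ← mul_assoc, hs, one_mul]
  let f : DihedralGroup (Nat.card T) →* G :=
    { toFun := fun x => match x with
        | .r i => k i
        | .sr i => s * k i
      map_one' := by
        change k 0 = 1
        exact kz
      map_mul' := by
        rintro (i | i) (j | j)
        · exact kadd i j
        · change s * k (j - i) = k i * (s * k j)
          rw [← mul_assoc, ks, ksub, mul_assoc, ← kneg, kcomm]
        · change s * k (i + j) = s * k i * k j
          rw [kadd, mul_assoc]
        · change k (j - i) = s * k i * (s * k j)
          rw [mul_assoc, ← mul_assoc (k i), ks, ksub, ← mul_assoc, ← mul_assoc, hs, one_mul,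
            ← kneg, kcomm] }
  have finj : Function.Injective f := by
    rintro (i | i) (j | j) h
    · exact congrArg _ (kinj h)
    · exfalso
      change k i = s * k j at h
      apply hsT
      rw [eq_mul_inv_of_mul_eq h.symm]
      exact T.mul_mem (kT _) (T.inv_mem (kT _))
    · exfalso
      change s * k i = k j at h
      apply hsT
      rw [eq_mul_inv_of_mul_eq h]
      exact T.mul_mem (kT _) (T.inv_mem (kT _))
    · exact congrArg _ (kinj (mul_left_cancel h))
  refine ⟨f.range, ⟨(MonoidHom.ofInjective finj).symm⟩, fun g => ⟨?_, ?_⟩⟩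
  · rintro ⟨i | i, rfl⟩
    · exact Or.inl (kT i)
    · right
      change s * (s * k i) ∈ T
      rw [← mul_assoc, hs, one_mul]; exact kT i
  · rintro (h | h)
    · obtain ⟨i, rfl⟩ := ksurj _ h
      exact ⟨.r i, rfl⟩
    · obtain ⟨i, hi⟩ := ksurj _ h
      refine ⟨.sr i, ?_⟩
      change s * k i = g
      rw [hi, ← mul_assoc, hs, one_mul]

lemma two_zero_iff (F : Type*) [Field F] [Fintype F] :
    (2 : F) = 0 ↔ Fintype.card F % 2 = 0 := by
  rw [← FiniteField.even_card_iff_char_two]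
  constructor
  · intro h
    have h1 : ringChar F ∣ 2 := ringChar.dvd (by exact_mod_cast h)
    exact ((Nat.dvd_prime Nat.prime_two).1 h1).resolve_left CharP.ringChar_ne_one
  · intro h
    have := ringChar.Nat.cast_ringChar (R := F)
    rw [h] at this
    exact_mod_cast this

lemma card_sq_one (F : Type*) [Field F] [Fintype F] :
    Nat.card {x : F // x ^ 2 = 1} = if Fintype.card F % 2 = 0 then 1 else 2 := by
  have h1 := two_zero_iff F
  change Nat.card ({x : F | x ^ 2 = 1} : Set F) = _
  have h2 : {x : F | x ^ 2 = 1} = {1, -1} := by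
    ext x; simp
  rw [h2, Nat.card_coe_set_eq]
  split_ifs with h
  · have : (-1 : F) = 1 := by linear_combination -(h1.2 h)
    rw [this]; simp
  · apply Set.ncard_pair
    intro h3
    exact h (h1.1 (by linear_combination h3))

lemma card_hom {G H : Type*} [Group G] [Group H] (f : G →* H) :
    Nat.card f.ker * Nat.card f.range = Nat.card G := by
  rw [← Subgroup.index_ker, Subgroup.card_mul_index]

lemma mk_center_iff {F : Type*} [Field F] (g : SpecialLinearGroup (Fin 2) F) :
    QuotientGroup.mk' (Subgroup.center (SpecialLinearGroup (Fin 2) F)) g = 1 ↔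
      g 0 1 = 0 ∧ g 1 0 = 0 ∧ g 0 0 = g 1 1 := by
  rw [QuotientGroup.mk'_apply, QuotientGroup.eq_one_iff, Matrix.SpecialLinearGroup.mem_center_iff]
  constructor
  · rintro ⟨r, -, hr⟩
    rw [← hr]; simp
  · rintro ⟨h1, h2, h3⟩
    have := g.det_coe
    rw [det_fin_two, h1, h2, ← h3] at this
    refine ⟨g 0 0, by simpa [sq] using this, ?_⟩
    ext i j
    fin_cases i <;> fin_cases j <;> simp [*]


def slMk {F : Type*} [Field F] (w x y z : F) (h : w * z - x * y = 1) :
    Matrix.SpecialLinearGroup (Fin 2) F := ⟨!![w, x; y, z], by rw [det_fin_two]; simpa using h⟩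

section
variable {F : Type*} [Field F] (w x y z : F) (h : w * z - x * y = 1)
@[simp] lemma slMk00 : slMk w x y z h 0 0 = w := rfl
@[simp] lemma slMk01 : slMk w x y z h 0 1 = x := rfl
@[simp] lemma slMk10 : slMk w x y z h 1 0 = y := rfl
@[simp] lemma slMk11 : slMk w x y z h 1 1 = z := rfl
end

lemma sl_ext {F : Type*} [Field F] {g h : Matrix.SpecialLinearGroup (Fin 2) F}
    (h00 : g 0 0 = h 0 0) (h01 : g 0 1 = h 0 1) (h10 : g 1 0 = h 1 0) (h11 : g 1 1 = h 1 1) :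
    g = h := by
  ext i j
  fin_cases i <;> fin_cases j <;> assumption

lemma sl_mul {F : Type*} [Field F] (g h : Matrix.SpecialLinearGroup (Fin 2) F) (i j : Fin 2) :
    (g * h) i j = g i 0 * h 0 j + g i 1 * h 1 j := by
  rw [Matrix.SpecialLinearGroup.coe_mul, Matrix.mul_apply, Fin.sum_univ_two]

section
variable {F : Type*} [Field F] (g : Matrix.SpecialLinearGroup (Fin 2) F)
lemma sl_inv00 : g⁻¹ 0 0 = g 1 1 := by
  simp [Matrix.SpecialLinearGroup.coe_inv, Matrix.adjugate_fin_two]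
lemma sl_inv01 : g⁻¹ 0 1 = - g 0 1 := by
  simp [Matrix.SpecialLinearGroup.coe_inv, Matrix.adjugate_fin_two]
lemma sl_inv10 : g⁻¹ 1 0 = - g 1 0 := by
  simp [Matrix.SpecialLinearGroup.coe_inv, Matrix.adjugate_fin_two]
lemma sl_inv11 : g⁻¹ 1 1 = g 0 0 := by
  simp [Matrix.SpecialLinearGroup.coe_inv, Matrix.adjugate_fin_two]
lemma sl_det : g 0 0 * g 1 1 - g 0 1 * g 1 0 = 1 := by
  rw [← det_fin_two]; exact g.det_coe
end

lemma A_part (F : Type*) [Field F] [Fintype F] :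
    ∃ A : Subgroup (Matrix.ProjectiveSpecialLinearGroup (Fin 2) F), IsCoatom A ∧
      Nat.card {x : F // x ^ 2 = 1} * Nat.card A = Fintype.card F * (Fintype.card F - 1) ∧
      ∀ g : Matrix.SpecialLinearGroup (Fin 2) F,
        QuotientGroup.mk' (Subgroup.center (Matrix.SpecialLinearGroup (Fin 2) F)) g ∈ A ↔
          g 1 0 = 0 := by
  let π := QuotientGroup.mk' (Subgroup.center (Matrix.SpecialLinearGroup (Fin 2) F))
  have πs : Function.Surjective π := QuotientGroup.mk'_surjective _
  let A' : Subgroup (Matrix.SpecialLinearGroup (Fin 2) F) :=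
    { carrier := {g | g 1 0 = 0}
      one_mem' := by simp
      mul_mem' := by
        intro x y hx hy
        simp only [Set.mem_ofPred_eq] at *
        simp [sl_mul, hx, hy]
      inv_mem' := by
        intro x hx
        simp only [Set.mem_ofPred_eq] at *
        simp [sl_inv10, hx] }
  have memA' : ∀ g, g ∈ A' ↔ g 1 0 = 0 := fun g => Iff.rfl
  have key : ∀ g, π g ∈ A'.map π ↔ g 1 0 = 0 := by
    intro g
    rw [← Subgroup.mem_comap, Subgroup.comap_map_eq_self, memA']
    intro x hx
    exact ((mk_center_iff x).1 hx).2.1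
  refine ⟨A'.map π, ⟨?_, ?_⟩, ?_, key⟩
  · intro h
    have : π (slMk 0 (-1) 1 0 (by simp)) ∈ A'.map π := h ▸ Subgroup.mem_top _
    rw [key] at this
    simp at this
  · intro K hK
    obtain ⟨hle, k, hk, hkA⟩ := SetLike.lt_iff_le_and_exists.1 hK
    obtain ⟨g, rfl⟩ := πs k
    rw [key] at hkA
    rw [eq_top_iff]
    rintro x -
    obtain ⟨h, rfl⟩ := πs x
    by_cases hh : h 1 0 = 0
    · exact hle ((key h).2 hh)
    let u : Matrix.SpecialLinearGroup (Fin 2) F :=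
      slMk (h 1 0 / g 1 0) ((h 1 1 - g 1 1 * (g 1 0 / h 1 0)) / g 1 0) 0 (g 1 0 / h 1 0) (by
        field_simp; simp)
    have hu : π u ∈ K := hle ((key u).2 (by simp [u]))
    have hv : π (g * u * h⁻¹) ∈ K := hle ((key _).2 (by
      simp only [u, sl_mul, sl_inv00, sl_inv10, slMk00, slMk01, slMk10, slMk11]
      field_simp
      ring))
    have : π h = (π (g * u * h⁻¹))⁻¹ * π g * π u := by
      simp only [map_mul, map_inv]; group
    rw [this]
    exact K.mul_mem (K.mul_mem (K.inv_mem hv) hk) hu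
  · have hc := card_hom (π.comp A'.subtype)
    have e1 : A' ≃ F × Fˣ :=
      { toFun := fun g => (g.1 0 1, ⟨g.1 0 0, g.1 1 1, by
          have := sl_det g.1; rw [(memA' _).1 g.2] at this; simpa using this, by
          have := sl_det g.1; rw [(memA' _).1 g.2] at this
          rw [mul_comm]; simpa using this⟩)
        invFun := fun p => ⟨slMk (p.2 : F) p.1 0 ((p.2⁻¹ : Fˣ) : F) (by
          simp), by rw [memA']; simp⟩
        left_inv := by
          intro g
          have := (memA' _).1 g.2
          apply Subtype.ext
          apply sl_ext <;> simp [this]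
        right_inv := by
          intro p
          ext <;> simp }
    have e2 : (π.comp A'.subtype).ker ≃ {x : F // x ^ 2 = 1} :=
      { toFun := fun g => ⟨g.1.1 0 0, by
          obtain ⟨h1, h2, h3⟩ := (mk_center_iff g.1.1).1 g.2
          have := sl_det g.1.1; rw [h1, ← h3] at this
          linear_combination this⟩
        invFun := fun x => ⟨⟨slMk x.1 0 0 x.1 (by
          linear_combination x.2), by rw [memA']; simp⟩,
          (mk_center_iff _).2 (by simp)⟩
        left_inv := by
          intro g
          obtain ⟨h1, h2, h3⟩ := (mk_center_iff g.1.1).1 g.2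
          apply Subtype.ext
          apply Subtype.ext
          apply sl_ext <;> simp [h1, h2, h3]
        right_inv := by
          intro p
          ext; simp }
    have e3 : (π.comp A'.subtype).range = A'.map π := by
      rw [MonoidHom.range_comp, Subgroup.range_subtype]
    rw [e3, Nat.card_congr e2, Nat.card_congr e1, Nat.card_prod, Nat.card_units] at hc
    simpa using hc

open QuadraticAlgebra in
/-- multiplication matrix of an element of norm one -/
def tP {F : Type*} [Field F] {a b : F} (z : QuadraticAlgebra F a b) (h : z.norm = 1) :
    Matrix.SpecialLinearGroup (Fin 2) F :=
  slMk z.re (a * z.im) z.im (z.re + b * z.im) (by rw [← h, QuadraticAlgebra.norm_def]; ring)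

open QuadraticAlgebra in
/-- multiplication composed with conjugation, for an element of norm minus one -/
def tQ {F : Type*} [Field F] {a b : F} (z : QuadraticAlgebra F a b) (h : z.norm = -1) :
    Matrix.SpecialLinearGroup (Fin 2) F :=
  slMk z.re (b * z.re - a * z.im) z.im (- z.re) (by rw [← neg_neg (1 : F), ← h, QuadraticAlgebra.norm_def]; ring)

open QuadraticAlgebra in
lemma B_part (F : Type*) [Field F] [Fintype F] (a b : F)
    [hirr : Fact (∀ r : F, r ^ 2 ≠ a + b * r)]
    (hab : b ≠ 0 ∨ (2 : F) ≠ 0) (m : ℕ)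
    (hm : Nat.card {x : F // x ^ 2 = 1} * m = Fintype.card F + 1)
    (hsurj : ∀ c : F, ∃ z : QuadraticAlgebra F a b, z.norm = c) :
    ∃ B : Subgroup (Matrix.ProjectiveSpecialLinearGroup (Fin 2) F),
      Nonempty (B ≃* DihedralGroup m) ∧
      ∀ g, g ∈ B ↔
        (∃ (z : QuadraticAlgebra F a b) (h : z.norm = 1),
          QuotientGroup.mk' (Subgroup.center (Matrix.SpecialLinearGroup (Fin 2) F)) (tP z h) = g) ∨
        (∃ (z : QuadraticAlgebra F a b) (h : z.norm = -1),
          QuotientGroup.mk' (Subgroup.center (Matrix.SpecialLinearGroup (Fin 2) F)) (tQ z h) = g)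
          := by
  let π := QuotientGroup.mk' (Subgroup.center (Matrix.SpecialLinearGroup (Fin 2) F))
  have cK : Nat.card (QuadraticAlgebra F a b) = Fintype.card F * Fintype.card F := by
    rw [Nat.card_congr (equivProd a b), Nat.card_prod, Nat.card_eq_fintype_card]
  have : Finite (QuadraticAlgebra F a b) := Finite.of_equiv _ (equivProd a b).symm
  let nu : (QuadraticAlgebra F a b)ˣ →* Fˣ := Units.map (QuadraticAlgebra.norm : (QuadraticAlgebra F a b) →* F)
  let N : Subgroup (QuadraticAlgebra F a b)ˣ := nu.ker
  have hN : ∀ w : N, norm (w.1 : (QuadraticAlgebra F a b)) = 1 := fun w => by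
    have := w.2
    rw [MonoidHom.mem_ker] at this
    exact congrArg Units.val this
  have nus : Function.Surjective nu := by
    intro c
    obtain ⟨z, hz⟩ := hsurj c
    have hz0 : z ≠ 0 := by
      rintro rfl
      rw [QuadraticAlgebra.norm_zero] at hz
      exact c.ne_zero hz.symm
    exact ⟨Units.mk0 z hz0, Units.ext hz⟩
  have cN : Nat.card N = Fintype.card F + 1 := by
    have h : Nat.card N * Nat.card nu.range = Nat.card (QuadraticAlgebra F a b)ˣ := card_hom nu
    rw [MonoidHom.range_eq_top.2 nus, Subgroup.card_top, Nat.card_units, Nat.card_units, cK,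
      Nat.card_eq_fintype_card (α := F)] at h
    have h1 : 1 < Fintype.card F := Fintype.one_lt_card
    generalize Fintype.card F = q at h h1 ⊢
    obtain ⟨k, rfl⟩ : ∃ k, q = k + 2 := ⟨q - 2, by omega⟩
    have : (k + 2) * (k + 2) - 1 = (k + 3) * (k + 2 - 1) := by
      rw [Nat.sub_eq_iff_eq_add (by nlinarith), show k + 2 - 1 = k + 1 by omega]; ring
    rw [this] at h
    exact Nat.eq_of_mul_eq_mul_right (by omega) h
  let ψ : N →* Matrix.ProjectiveSpecialLinearGroup (Fin 2) F := π.comp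
    { toFun := fun w => tP (w.1 : (QuadraticAlgebra F a b)) (hN w)
      map_one' := by apply sl_ext <;> simp [tP]
      map_mul' := by
        intro x y
        apply sl_ext <;> rw [sl_mul] <;> simp [tP] <;> ring }
  have ψdef : ∀ w, ψ w = π (tP (w.1 : (QuadraticAlgebra F a b)) (hN w)) := fun w => rfl
  have memT : ∀ g, g ∈ ψ.range ↔ ∃ (z : (QuadraticAlgebra F a b)) (h : z.norm = 1), π (tP z h) = g := by
    intro g
    constructor
    · rintro ⟨w, rfl⟩
      exact ⟨w.1, hN w, rfl⟩
    · rintro ⟨z, h, rfl⟩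
      have hz0 : z ≠ 0 := by
        rintro rfl
        rw [QuadraticAlgebra.norm_zero] at h
        exact zero_ne_one h
      exact ⟨⟨Units.mk0 z hz0, by rw [MonoidHom.mem_ker]; exact Units.ext h⟩, rfl⟩
  have cyc : IsCyclic ψ.range := isCyclic_of_surjective ψ.rangeRestrict ψ.rangeRestrict_surjective
  have e2 : ψ.ker ≃ {x : F // x ^ 2 = 1} :=
    { toFun := fun w => ⟨(w.1.1 : (QuadraticAlgebra F a b)).re, by
        obtain ⟨h1, h2, h3⟩ := (mk_center_iff _).1 (show π (tP (w.1.1 : (QuadraticAlgebra F a b)) (hN w.1)) = 1 from w.2)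
        have := hN w.1
        simp only [tP, slMk10] at h2
        rw [QuadraticAlgebra.norm_def, h2] at this
        linear_combination this⟩
      invFun := fun x =>
        have hx : norm (⟨x.1, 0⟩ : (QuadraticAlgebra F a b)) = 1 := by
          rw [QuadraticAlgebra.norm_def]; linear_combination x.2
        ⟨⟨Units.mk0 ⟨x.1, 0⟩ (by
          intro h0
          rw [h0, QuadraticAlgebra.norm_zero] at hx
          exact zero_ne_one hx), by rw [MonoidHom.mem_ker]; exact Units.ext hx⟩, by
          rw [MonoidHom.mem_ker, ψdef, mk_center_iff]
          simp [tP]⟩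
      left_inv := by
        intro w
        obtain ⟨h1, h2, h3⟩ := (mk_center_iff _).1 (show π (tP (w.1.1 : (QuadraticAlgebra F a b)) (hN w.1)) = 1 from w.2)
        simp only [tP, slMk10] at h2
        apply Subtype.ext
        apply Subtype.ext
        apply Units.ext
        apply QuadraticAlgebra.ext
        · rfl
        · exact h2.symm
      right_inv := by
        intro x
        rfl }
  have cT : Nat.card ψ.range = m := by
    have h := card_hom ψ
    rw [Nat.card_congr e2, cN, ← hm] at h
    refine Nat.eq_of_mul_eq_mul_left ?_ h
    by_contra h0
    have : Nat.card {x : F // x ^ 2 = 1} = 0 := by omega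
    rw [this] at hm
    omega
  obtain ⟨z0, hz0⟩ := hsurj (-1)
  have hss : ∀ (z : QuadraticAlgebra F a b) (hz : QuadraticAlgebra.norm z = -1), π (tQ z hz) * π (tQ z hz) = 1 := by
    intro z hz
    rw [← map_mul]
    apply (mk_center_iff _).2
    simp only [sl_mul]
    simp [tQ]
    refine ⟨?_, ?_, ?_⟩ <;> ring
  have hQP : ∀ (z : QuadraticAlgebra F a b) hz (w : QuadraticAlgebra F a b) hw, π (tQ z hz) * π (tP w hw) =
      π (tQ (z * star w) (by rw [map_mul, QuadraticAlgebra.norm_star, hz, hw]; simp)) := by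
    intro z hz w hw
    rw [← map_mul]
    congr 1
    apply sl_ext <;> rw [sl_mul] <;> simp [tP, tQ] <;> ring
  have hPQ : ∀ (z : QuadraticAlgebra F a b) hz (w : QuadraticAlgebra F a b) hw, π (tP w hw) * π (tQ z hz) =
      π (tQ (w * z) (by rw [map_mul, hz, hw]; simp)) := by
    intro z hz w hw
    rw [← map_mul]
    congr 1
    apply sl_ext <;> rw [sl_mul] <;> simp [tP, tQ] <;> ring
  have hQQ : ∀ (z : QuadraticAlgebra F a b) hz (w : QuadraticAlgebra F a b) hw, π (tQ w hw) * π (tQ z hz) =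
      π (tP (w * star z) (by rw [map_mul, QuadraticAlgebra.norm_star, hz, hw]; simp)) := by
    intro z hz w hw
    rw [← map_mul]
    congr 1
    apply sl_ext <;> rw [sl_mul] <;> simp [tP, tQ] <;> ring
  have hsT : π (tQ z0 hz0) ∉ ψ.range := by
    rw [memT]
    rintro ⟨z, h, hg⟩
    have h0 := hss z0 hz0
    nth_rewrite 1 [← hg] at h0
    rw [hPQ] at h0
    have hw : QuadraticAlgebra.norm (z * z0) = -1 := by rw [map_mul, hz0, h]; simp
    obtain ⟨h1, h2, h3⟩ := (mk_center_iff _).1 h0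
    clear h0
    simp only [tQ, slMk00, slMk01, slMk10, slMk11] at h1 h2 h3
    generalize z * z0 = w at h1 h2 h3 hw
    rw [QuadraticAlgebra.norm_def, h2] at hw
    rw [h2] at h1
    have hre : w.re ≠ 0 := by
      intro hre
      rw [hre] at hw
      simp at hw
    rcases hab with hb | hb
    · exact mul_ne_zero hb hre (by linear_combination h1)
    · exact mul_ne_zero hb hre (by linear_combination h3)
  have hconj : ∀ t ∈ ψ.range, π (tQ z0 hz0) * t * π (tQ z0 hz0) = t⁻¹ := by
    intro t ht
    obtain ⟨z, h, rfl⟩ := (memT t).1 ht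
    rw [eq_inv_iff_mul_eq_one, mul_assoc, hQP, hss]
  obtain ⟨B, hB1, hB2⟩ := dih_aux m ψ.range cyc cT (π (tQ z0 hz0)) (hss _ _) hsT hconj
  · refine ⟨B, hB1, fun g => ?_⟩
    rw [hB2, memT, memT]
    refine or_congr Iff.rfl ⟨?_, ?_⟩
    · rintro ⟨z, h, hg⟩
      have : g = π (tQ z0 hz0) * π (tP z h) := by
        rw [hg, ← mul_assoc, hss, one_mul]
      rw [this, hQP]
      exact ⟨_, _, rfl⟩
    · rintro ⟨z, h, rfl⟩
      exact ⟨_, _, (hQQ z h z0 hz0).symm⟩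

lemma main_part (F : Type*) [Field F] [Fintype F] (a b : F)
    [hirr : Fact (∀ r : F, r ^ 2 ≠ a + b * r)]
    (hab : b ≠ 0 ∨ (2 : F) ≠ 0) (m n k : ℕ)
    (hm : Nat.card {x : F // x ^ 2 = 1} * m = Fintype.card F + 1)
    (hn : Nat.card {x : F // x ^ 2 = 1} * n = Fintype.card F * (Fintype.card F - 1))
    (hsurj : ∀ c : F, ∃ z : QuadraticAlgebra F a b, z.norm = c)
    (hsq : ∀ c : F, c ≠ 0 → ∃ l : F, l ^ 2 * c = 1 ∨ l ^ 2 * c = -1)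
    (hk : ((∀ x : F, x ^ 2 ≠ -1) ∧ k = 1) ∨ ((2 : F) = 0 ∧ k = 2)) :
    ∃ A B : Subgroup (Matrix.ProjectiveSpecialLinearGroup (Fin 2) F),
      IsCoatom A ∧
      Nat.card A = n ∧
      Nonempty (B ≃* DihedralGroup m) ∧
      (∀ g, ∃ a ∈ A, ∃ b ∈ B, g = a * b) ∧
      Nat.card (A ⊓ B : Subgroup (Matrix.ProjectiveSpecialLinearGroup (Fin 2) F)) = k := by
  obtain ⟨A, hA, hcA, hmA⟩ := A_part F
  obtain ⟨B, hB, hmB⟩ := B_part F a b hab m hm hsurj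
  let π := QuotientGroup.mk' (Subgroup.center (Matrix.SpecialLinearGroup (Fin 2) F))
  have πs : Function.Surjective π := QuotientGroup.mk'_surjective _
  have hd : 0 < Nat.card {x : F // x ^ 2 = 1} := by
    by_contra h0
    have : Nat.card {x : F // x ^ 2 = 1} = 0 := by omega
    rw [this] at hm
    omega
  refine ⟨A, B, hA, ?_, hB, ?_, ?_⟩
  · exact Nat.eq_of_mul_eq_mul_left hd (hcA.trans hn.symm)
  · intro x
    obtain ⟨g, rfl⟩ := πs x
    suffices h : ∃ u, π u ∈ B ∧ (g * u) 1 0 = 0 by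
      obtain ⟨u, h1, h2⟩ := h
      refine ⟨π (g * u), (hmA _).2 h2, (π u)⁻¹, B.inv_mem h1, ?_⟩
      rw [map_mul, mul_inv_cancel_right]
    have hne : QuadraticAlgebra.norm (⟨g 1 1, - g 1 0⟩ : QuadraticAlgebra F a b) ≠ 0 := by
      rw [Ne, QuadraticAlgebra.norm_eq_zero_iff_eq_zero]
      intro h0
      have h1 : g 1 1 = 0 := congrArg QuadraticAlgebra.re h0
      have h2 : - g 1 0 = 0 := congrArg QuadraticAlgebra.im h0
      have := sl_det g
      rw [h1, neg_eq_zero.1 h2] at this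
      simp at this
    obtain ⟨l, hl | hl⟩ := hsq _ hne
    · refine ⟨tP (⟨l * g 1 1, - (l * g 1 0)⟩ : QuadraticAlgebra F a b) ?_,
        (hmB _).2 (Or.inl ⟨_, _, rfl⟩), ?_⟩
      · rw [QuadraticAlgebra.norm_def] at hl ⊢; linear_combination hl
      · rw [sl_mul]; simp only [tP, slMk00, slMk10]; ring
    · refine ⟨tQ (⟨l * g 1 1, - (l * g 1 0)⟩ : QuadraticAlgebra F a b) ?_,
        (hmB _).2 (Or.inr ⟨_, _, rfl⟩), ?_⟩
      · rw [QuadraticAlgebra.norm_def] at hl ⊢; linear_combination hl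
      · rw [sl_mul]; simp only [tQ, slMk00, slMk10]; ring
  · have hP : ∀ (z : QuadraticAlgebra F a b) h, π (tP z h) ∈ A → π (tP z h) = 1 := by
      intro z h hz
      have h2 := (hmA _).1 hz
      apply (mk_center_iff _).2
      simp only [tP, slMk00, slMk01, slMk10, slMk11] at *
      simp [h2]
    have hQ : ∀ (z : QuadraticAlgebra F a b) h, π (tQ z h) ∈ A → z.im = 0 ∧ z.re ^ 2 = -1 := by
      intro z h hz
      have h2 := (hmA _).1 hz
      simp only [tQ, slMk10] at *
      rw [QuadraticAlgebra.norm_def, h2] at h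
      exact ⟨h2, by linear_combination h⟩
    rcases hk with ⟨hk, rfl⟩ | ⟨h2, rfl⟩
    · rw [Subgroup.card_eq_one, eq_bot_iff]
      rintro x ⟨hx1, hx2⟩
      rcases (hmB _).1 hx2 with ⟨z, h, rfl⟩ | ⟨z, h, rfl⟩
      · exact hP z h hx1
      · exact absurd (hQ z h hx1).2 (hk _)
    · have hb : b ≠ 0 := hab.resolve_right (fun h => h h2)
      have hn1 : (-1 : F) = 1 := by linear_combination -h2
      have ho : QuadraticAlgebra.norm (⟨1, 0⟩ : QuadraticAlgebra F a b) = -1 := by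
        rw [hn1, QuadraticAlgebra.norm_def]; simp
      have hset : ((A ⊓ B : Subgroup _) : Set (Matrix.ProjectiveSpecialLinearGroup (Fin 2) F)) =
          {1, π (tQ (⟨1, 0⟩ : QuadraticAlgebra F a b) ho)} := by
        ext x
        constructor
        · rintro ⟨hx1, hx2⟩
          rcases (hmB _).1 hx2 with ⟨z, h, rfl⟩ | ⟨z, h, rfl⟩
          · exact Or.inl (hP z h hx1)
          · right
            obtain ⟨h3, h4⟩ := hQ z h hx1
            have h5 : z.re = 1 := by
              have : (z.re - 1) ^ 2 = 0 := by linear_combination h4 - z.re * h2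
              exact sub_eq_zero.1 (pow_eq_zero_iff two_ne_zero |>.1 this)
            have : z = ⟨1, 0⟩ := QuadraticAlgebra.ext h5 h3
            subst this
            rfl
        · rintro (rfl | rfl)
          · exact Subgroup.one_mem _
          · exact ⟨(hmA _).2 (by simp [tQ]), (hmB _).2 (Or.inr ⟨_, _, rfl⟩)⟩
      change Nat.card ((A ⊓ B : Subgroup _) :
        Set (Matrix.ProjectiveSpecialLinearGroup (Fin 2) F)) = 2
      rw [hset, Nat.card_coe_set_eq]
      apply Set.ncard_pair
      intro h
      have := ((mk_center_iff _).1 h.symm).1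
      simp [tQ] at this
      exact hb this




/-- for a prime power `q` with `q ≢ 1 (mod 4)` there is a factorization
`PSL(2,q) = AB` with `A` a maximal parabolic subgroup (a maximal subgroup of order
`q(q−1)/gcd(2,q−1)`) and `B` dihedral of order `2(q+1)` if `q` is even and of order `q+1`
if `q` is odd; moreover `|A ∩ B| = 2` if `q` is even and `|A ∩ B| = 1` if `q` is odd. -/
theorem stmt_11 (F : Type*) [Field F] [Fintype F] (q : ℕ) (hq : Fintype.card F = q)
    (hmod : q % 4 ≠ 1) :
    ∃ A B : Subgroup (Matrix.ProjectiveSpecialLinearGroup (Fin 2) F),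
      IsCoatom A ∧
      Nat.card A = q * (q - 1) / Nat.gcd 2 (q - 1) ∧
      Nonempty (B ≃* DihedralGroup (if Even q then q + 1 else (q + 1) / 2)) ∧
      (∀ g, ∃ a ∈ A, ∃ b ∈ B, g = a * b) ∧
      Nat.card (A ⊓ B : Subgroup (Matrix.ProjectiveSpecialLinearGroup (Fin 2) F))
        = (if Even q then 2 else 1) := by
  subst hq
  have h2 := two_zero_iff F
  have hc := card_sq_one F
  have h1 : 1 < Fintype.card F := Fintype.one_lt_card
  rcases Nat.mod_two_eq_zero_or_one (Fintype.card F) with hev | hodd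
  · have hE : Even (Fintype.card F) := Nat.even_iff.2 hev
    have h20 := h2.2 hev
    rw [if_pos hev] at hc
    have hsqr : ∀ c : F, ∃ x, x ^ 2 = c := fun c => by
      obtain ⟨x, hx⟩ := FiniteField.isSquare_of_char_two
        (FiniteField.even_card_iff_char_two.2 hev) c
      exact ⟨x, by rw [hx, sq]⟩
    rw [if_pos hE, if_pos hE]
    have hg : Nat.gcd 2 (Fintype.card F - 1) = 1 := by
      rw [← Nat.coprime_iff_gcd_eq_one, Nat.coprime_two_left, Nat.odd_iff]
      omega
    rw [hg, Nat.div_one]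
    obtain ⟨a, ha⟩ : ∃ a : F, ∀ r, r ^ 2 ≠ a + 1 * r := by
      have hni : ¬ Function.Injective (fun r : F => r ^ 2 - r) := fun h =>
        zero_ne_one (h (show (0 : F) ^ 2 - 0 = 1 ^ 2 - 1 by ring))
      rw [Finite.injective_iff_surjective] at hni
      simp only [Function.Surjective, not_forall, not_exists] at hni
      obtain ⟨a, ha⟩ := hni
      exact ⟨a, fun r hr => ha r (by linear_combination hr)⟩
    have : Fact (∀ r : F, r ^ 2 ≠ a + 1 * r) := ⟨ha⟩
    refine main_part F a 1 (Or.inl one_ne_zero) _ _ _ ?_ ?_ ?_ ?_ (Or.inr ⟨h20, rfl⟩)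
    · rw [hc, one_mul]
    · rw [hc, one_mul]
    · intro c
      obtain ⟨x, hx⟩ := hsqr c
      exact ⟨⟨x, 0⟩, by rw [QuadraticAlgebra.norm_def]; linear_combination hx⟩
    · intro c hc
      obtain ⟨x, hx⟩ := hsqr c⁻¹
      exact ⟨x, Or.inl (by rw [hx, inv_mul_cancel₀ hc])⟩
  · have hE : ¬ Even (Fintype.card F) := by rw [Nat.even_iff]; omega
    have h20 : (2 : F) ≠ 0 := fun h => by have := h2.1 h; omega
    have h3 : Fintype.card F % 4 = 3 := by omega
    rw [if_neg (by omega)] at hc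
    rw [if_neg hE, if_neg hE]
    have hg : Nat.gcd 2 (Fintype.card F - 1) = 2 := Nat.gcd_eq_left (by omega)
    rw [hg]
    have hns : ¬ IsSquare (-1 : F) := fun h => FiniteField.isSquare_neg_one_iff.1 h h3
    have hns' : ∀ x : F, x ^ 2 ≠ -1 := fun x hx => hns ⟨x, by rw [← hx, sq]⟩
    have : Fact (∀ r : F, r ^ 2 ≠ -1 + 0 * r) := ⟨fun r => by simpa using hns' r⟩
    refine main_part F (-1) 0 (Or.inr h20) _ _ _ ?_ ?_ ?_ ?_ (Or.inl ⟨hns', rfl⟩)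
    · rw [hc]; omega
    · rw [hc]
      exact Nat.mul_div_cancel' (Dvd.dvd.mul_left (by omega) _)
    · intro c
      obtain ⟨x, y, hxy⟩ := FiniteField.exists_root_sum_quadratic
        (f := (Polynomial.X ^ 2 : Polynomial F)) (g := Polynomial.X ^ 2 - Polynomial.C c)
        (Polynomial.degree_X_pow 2) (Polynomial.degree_X_pow_sub_C (by decide) _) hodd
      simp at hxy
      exact ⟨⟨x, y⟩, by rw [QuadraticAlgebra.norm_def]; linear_combination hxy⟩
    · intro c hc
      by_cases hs : IsSquare c
      · obtain ⟨y, rfl⟩ := hs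
        have : y ≠ 0 := fun h => hc (by rw [h, zero_mul])
        exact ⟨y⁻¹, Or.inl (by field_simp)⟩
      · have hs' : IsSquare (-1 * c) := by
          classical
          rw [← quadraticChar_one_iff_isSquare (mul_ne_zero (neg_ne_zero.2 one_ne_zero) hc),
            map_mul, quadraticChar_neg_one_iff_not_isSquare.2 hns,
            quadraticChar_neg_one_iff_not_isSquare.2 hs]
          norm_num
        obtain ⟨y, hy⟩ := hs'
        have : y ≠ 0 := by
          rintro rfl
          apply hc
          linear_combination -hy
        exact ⟨y⁻¹, Or.inr (by field_simp; linear_combination -hy)⟩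
end
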